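/- arXiv:2505.12270 — 2 statements merged into one kernel-verified Lean document; each statement's English description precedes it below -/
import Mathlib

section
/- For every nonnegative integer n and each i ∈ {2,3,4,5}, b^4_{3,4}(48n + 8i + 7) ≡ 0 (mod 8). Moreover b^4_{3,4}(1) ≡ 4 (mod 3) (indeed b^4_{3,4}(1) = 4) and b^4_{3,4}(2n+1) ≡ 0 (mod 3) for every integer n ≥ 1. -/
/-- `coloredRegular k l m n` is the number of `k`-colored partitions of `n` into parts
divisible by neither `l` nor `m`, i.e. the coefficient of `q^n` in
`∏_{j ≥ 1, l ∤ j, m ∤ j} (1 - q^j)^{-k}`.  A `k`-colored partition is a multiset of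
(part, color) pairs, where parts are positive integers not divisible by `l` or `m`
and colors range over `{0, …, k-1}`. -/
noncomputable def coloredRegular (k l m n : ℕ) : ℕ :=
  Nat.card {M : Multiset (ℕ × ℕ) //
    (∀ x ∈ M, ¬ l ∣ x.1 ∧ ¬ m ∣ x.1 ∧ x.2 < k) ∧ (M.map Prod.fst).sum = n}

/-!
Write `f_k = ∏ (1 - q^(k i))`. Sorting the parts by divisibility by `3` and `4` gives
`∑ b(n) q^n = (f_3 f_4 / (f_1 f_12))^4`. Gauss's identities `φ(-q) = f_1^2 / f_2` and
`ψ(q) = f_2^2 / f_1` turn this into theta functions, and counting lattice points shows that the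
odd-indexed coefficients of `φ(q) φ(q^3)` and `ψ(q) ψ(q^3)` are generated by `2 ψ(q) ψ(q^3)` and
`φ(q) ψ(q^6)`.

Modulo `3`, the Frobenius map makes the generating function `φ(-q) φ(-q^3)` times a series in `q^2`;
taking odd-indexed coefficients, everything cancels and `∑ b(2 n + 1) q^n ≡ 1`.

Modulo `8`, `φ(-q)^4 ≡ 1`, so the generating function is `(φ(-q) φ(-q^3))^2` times a series in
`q^2`. The odd-indexed coefficients of a square are twice a product, and those of
`φ(-q) φ(-q^3)` are themselves even, so only `4` times a series modulo `2` remains. Two more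
dissections give `∑ b(8 n + 7) q^n ≡ 4 ψ(q^6)`.
-/

open Finset Filter PowerSeries
open scoped Topology PowerSeries.WithPiTopology

section FiniteIdentities

variable {R : Type*} [CommRing R] (x : R)

/-- The `s`-th correction term in Shanks's finite form of Gauss's identity for squares; it is
divisible by `x ^ (n + 1)`. -/
def shanksSquareTerm (n s : ℕ) : R :=
  2 * (-1) ^ (s + 1) * x ^ ((s + 1) * (n + 1)) *
    ((∏ k ∈ Ico (s + 1) n, (1 - x ^ (k + 1))) * ∏ k ∈ range s, (1 + x ^ (k + 1)))

lemma shanksSquareTerm_telescope {n r : ℕ} (hr : r ≤ n) :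
    ∏ k ∈ range (n + 1), (1 - x ^ (k + 1)) - (1 + x ^ (n + 1)) * ∏ k ∈ range n, (1 - x ^ (k + 1)) +
        ∑ s ∈ range r,
          (shanksSquareTerm x (n + 1) s - (1 + x ^ (n + 1)) * shanksSquareTerm x n s) =
      2 * (-1) ^ (r + 1) * x ^ ((r + 1) * (n + 1)) *
        ((∏ k ∈ Ico r n, (1 - x ^ (k + 1))) * ∏ k ∈ range r, (1 + x ^ (k + 1))) := by
  induction r with
  | zero =>
    rw [prod_range_succ, range_eq_Ico, sum_range_zero, prod_range_zero]
    ring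
  | succ r ih =>
    rw [sum_range_succ, ← add_assoc, ih (by omega), shanksSquareTerm, shanksSquareTerm,
      prod_Ico_succ_top (by omega), prod_eq_prod_Ico_succ_bot (show r < n by omega),
      prod_range_succ]
    ring

theorem shanks_square (n : ℕ) :
    (1 + 2 * ∑ a ∈ range n, (-1) ^ (a + 1) * x ^ (a + 1) ^ 2) * ∏ k ∈ range n, (1 + x ^ (k + 1)) =
      ∏ k ∈ range n, (1 - x ^ (k + 1)) + ∑ s ∈ range n, shanksSquareTerm x n s := by
  induction n with
  | zero => simp
  | succ n ih =>
    have telescope := shanksSquareTerm_telescope x (le_refl n)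
    have last : shanksSquareTerm x (n + 1) n =
        2 * (-1) ^ (n + 1) * x ^ ((n + 1) * (n + 2)) * ∏ k ∈ range n, (1 + x ^ (k + 1)) := by
      simp [shanksSquareTerm]
    rw [sum_sub_distrib, ← mul_sum, Ico_self, prod_empty] at telescope
    rw [sum_range_succ, prod_range_succ _ n, sum_range_succ _ n, last]
    linear_combination (1 + x ^ (n + 1)) * ih - telescope

/-- The `s`-th term in Shanks's finite form of Gauss's identity for triangular numbers; for `0 < s`
it is divisible by `x ^ (2 * n + 1)`. -/
def shanksTriangleTerm (n s : ℕ) : R :=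
  x ^ (s * (2 * n + 1)) *
    ((∏ k ∈ Ico s n, (1 - x ^ (2 * (k + 1)))) * ∏ k ∈ range s, (1 - x ^ (2 * k + 1)))

lemma shanksTriangleTerm_telescope {n r : ℕ} (hr : r ≤ n) :
    ∑ s ∈ range r,
        (shanksTriangleTerm x (n + 1) s - (1 - x ^ (2 * n + 1)) * shanksTriangleTerm x n s) =
      x ^ (r * (2 * n + 1)) * (1 - x ^ (2 * r)) *
        ((∏ k ∈ Ico r n, (1 - x ^ (2 * (k + 1)))) * ∏ k ∈ range r, (1 - x ^ (2 * k + 1))) := by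
  induction r with
  | zero => simp
  | succ r ih =>
    rw [sum_range_succ, ih (by omega), shanksTriangleTerm, shanksTriangleTerm,
      prod_Ico_succ_top (by omega), prod_eq_prod_Ico_succ_bot (show r < n by omega),
      prod_range_succ]
    ring

theorem shanks_triangle (n : ℕ) :
    (∑ a ∈ range n, (x ^ (a * (2 * a + 1)) + x ^ ((a + 1) * (2 * a + 1)))) *
        ∏ k ∈ range n, (1 - x ^ (2 * k + 1)) =
      ∑ s ∈ range n, shanksTriangleTerm x n s := by
  induction n with
  | zero => simp
  | succ n ih =>
    have telescope := shanksTriangleTerm_telescope x (le_refl n)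
    have last : shanksTriangleTerm x (n + 1) n =
        x ^ (n * (2 * n + 3)) * (1 - x ^ (2 * (n + 1))) * ∏ k ∈ range n, (1 - x ^ (2 * k + 1)) := by
      rw [shanksTriangleTerm, Nat.Ico_succ_singleton, prod_singleton]
      ring
    rw [sum_sub_distrib, ← mul_sum, Ico_self, prod_empty] at telescope
    rw [sum_range_succ, prod_range_succ _ n, sum_range_succ _ n, last]
    linear_combination (1 - x ^ (2 * n + 1)) * ih - telescope

end FiniteIdentities

section WeightSeries

variable {R : Type*} {ι κ : Type*}

/-- The generating function `∑ i, X ^ g i` of a family of exponents, encoded by the cardinalities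
of the fibres of `g`; an infinite fibre contributes the junk coefficient `0`. -/
noncomputable def weightSeries [Semiring R] (g : ι → ℕ) : R⟦X⟧ :=
  PowerSeries.mk fun n => ((g ⁻¹' {n}).ncard : R)

lemma coeff_weightSeries [Semiring R] (g : ι → ℕ) (n : ℕ) :
    coeff n (weightSeries g : R⟦X⟧) = ((g ⁻¹' {n}).ncard : R) :=
  coeff_mk _ _

lemma map_weightSeries {S : Type*} [Semiring R] [Semiring S] (F : R →+* S) (g : ι → ℕ) :
    PowerSeries.map F (weightSeries g) = weightSeries g := by
  ext n
  rw [PowerSeries.coeff_map, coeff_weightSeries, coeff_weightSeries, map_natCast]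

lemma weightSeries_comp_bijective [Semiring R] {e : κ → ι} (he : Function.Bijective e)
    (g : ι → ℕ) : (weightSeries (g ∘ e) : R⟦X⟧) = weightSeries g := by
  ext n
  rw [coeff_weightSeries, coeff_weightSeries, Set.preimage_comp,
    Set.ncard_preimage_of_injective_subset_range he.injective (by simp [he.surjective.range_eq])]

lemma expand_weightSeries [CommRing R] {k : ℕ} (hk : k ≠ 0) (g : ι → ℕ) :
    expand k hk (weightSeries g : R⟦X⟧) = weightSeries fun i => k * g i := by
  ext n
  rw [PowerSeries.coeff_expand, coeff_weightSeries]
  split_ifs with h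
  · obtain ⟨m, rfl⟩ := h
    rw [Nat.mul_div_cancel_left m hk.bot_lt, coeff_weightSeries]
    congr 2
    ext i
    simp [hk]
  · have empty : (fun i => k * g i) ⁻¹' {n} = ∅ :=
      Set.eq_empty_of_forall_notMem fun i hi => h ⟨g i, hi.symm⟩
    rw [coeff_weightSeries, empty, Set.ncard_empty, Nat.cast_zero]

lemma hasSum_weightSeries [Semiring R] [TopologicalSpace R] {g : ι → ℕ}
    (hg : ∀ n, {i | g i ≤ n}.Finite) :
    HasSum (fun i => (X : R⟦X⟧) ^ g i) (weightSeries g) := by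
  rw [WithPiTopology.hasSum_iff_hasSum_coeff]
  intro n
  have finite_fibre : (g ⁻¹' {n}).Finite := (hg n).subset fun i hi => le_of_eq hi
  have card_eq : ((g ⁻¹' {n}).ncard : R) = ∑ i ∈ finite_fibre.toFinset, coeff n (X ^ g i) := by
    rw [Set.ncard_eq_toFinset_card _ finite_fibre, card_eq_sum_ones, Nat.cast_sum]
    refine sum_congr rfl fun i hi => ?_
    rw [coeff_X_pow, if_pos ((finite_fibre.mem_toFinset.mp hi).symm), Nat.cast_one]
  rw [coeff_weightSeries, card_eq]
  refine hasSum_sum_of_ne_finset_zero fun i hi => ?_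
  rw [coeff_X_pow, if_neg fun h => hi (finite_fibre.mem_toFinset.mpr h.symm)]

lemma finite_setOf_add_le {g : ι → ℕ} {h : κ → ℕ} (hg : ∀ n, {i | g i ≤ n}.Finite)
    (hh : ∀ n, {j | h j ≤ n}.Finite) (n : ℕ) : {p : ι × κ | g p.1 + h p.2 ≤ n}.Finite :=
  ((hg n).prod (hh n)).subset fun p (hp : g p.1 + h p.2 ≤ n) =>
    ⟨(Nat.le_add_right _ _).trans hp, (Nat.le_add_left _ _).trans hp⟩

lemma finite_setOf_mul_le {k : ℕ} (hk : k ≠ 0) {g : ι → ℕ} (hg : ∀ n, {i | g i ≤ n}.Finite)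
    (n : ℕ) : {i | k * g i ≤ n}.Finite :=
  (hg n).subset fun _ hi => (Nat.le_mul_of_pos_left _ hk.bot_lt).trans hi

lemma weightSeries_mul [CommRing R] {g : ι → ℕ} {h : κ → ℕ}
    (hg : ∀ n, {i | g i ≤ n}.Finite) (hh : ∀ n, {j | h j ≤ n}.Finite) :
    (weightSeries g * weightSeries h : R⟦X⟧) = weightSeries fun p : ι × κ => g p.1 + h p.2 := by
  let : TopologicalSpace R := ⊥
  have : DiscreteTopology R := ⟨rfl⟩
  have product : HasSum (fun p : ι × κ => (X : R⟦X⟧) ^ g p.1 * X ^ h p.2)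
      (weightSeries fun p : ι × κ => g p.1 + h p.2) := by
    simpa only [pow_add] using hasSum_weightSeries (R := R) (finite_setOf_add_le hg hh)
  exact HasSum.mul_eq (hasSum_weightSeries hg) (hasSum_weightSeries hh) product

lemma weightSeries_sumElim [CommRing R] {g : ι → ℕ} {h : κ → ℕ}
    (hg : ∀ n, {i | g i ≤ n}.Finite) (hh : ∀ n, {j | h j ≤ n}.Finite) :
    (weightSeries (Sum.elim g h) : R⟦X⟧) = weightSeries g + weightSeries h := by
  let : TopologicalSpace R := ⊥
  have : DiscreteTopology R := ⟨rfl⟩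
  have finite_fibres : ∀ n, {i | Sum.elim g h i ≤ n}.Finite := by
    intro n
    exact Set.finite_preimage_inl_and_inr.mp ⟨hg n, hh n⟩
  exact (hasSum_weightSeries finite_fibres).unique
    (HasSum.sum (hasSum_weightSeries hg) (hasSum_weightSeries hh))

end WeightSeries

section EvenOddParts

variable {R : Type*} [CommRing R]

/-- The series `∑ a (2 n) X ^ n` of the even-indexed coefficients of `∑ a n X ^ n`. -/
noncomputable def evenPart : R⟦X⟧ →ₗ[R] R⟦X⟧ where
  toFun f := PowerSeries.mk fun n => coeff (2 * n) f
  map_add' f g := by ext; simp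
  map_smul' c f := by ext; simp

/-- The series `∑ a (2 n + 1) X ^ n` of the odd-indexed coefficients of `∑ a n X ^ n`. -/
noncomputable def oddPart : R⟦X⟧ →ₗ[R] R⟦X⟧ where
  toFun f := PowerSeries.mk fun n => coeff (2 * n + 1) f
  map_add' f g := by ext; simp
  map_smul' c f := by ext; simp

lemma coeff_evenPart (f : R⟦X⟧) (n : ℕ) : coeff n (evenPart f) = coeff (2 * n) f := by
  simp [evenPart]

lemma coeff_oddPart (f : R⟦X⟧) (n : ℕ) : coeff n (oddPart f) = coeff (2 * n + 1) f := by
  simp [oddPart]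

lemma map_evenPart {S : Type*} [CommRing S] (F : R →+* S) (f : R⟦X⟧) :
    PowerSeries.map F (evenPart f) = evenPart (PowerSeries.map F f) := by
  ext n
  simp only [PowerSeries.coeff_map, coeff_evenPart]

lemma map_oddPart {S : Type*} [CommRing S] (F : R →+* S) (f : R⟦X⟧) :
    PowerSeries.map F (oddPart f) = oddPart (PowerSeries.map F f) := by
  ext n
  simp only [PowerSeries.coeff_map, coeff_oddPart]

lemma evenPart_add_oddPart (f : R⟦X⟧) :
    expand 2 two_ne_zero (evenPart f) + X * expand 2 two_ne_zero (oddPart f) = f := by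
  ext n
  rw [map_add]
  rcases n.even_or_odd' with ⟨m, rfl | rfl⟩
  · rcases m with - | m
    · simp [coeff_evenPart, PowerSeries.coeff_expand]
    · have odd : ¬ 2 ∣ 2 * m + 1 := by omega
      rw [show 2 * (m + 1) = 2 * m + 1 + 1 by ring, coeff_succ_X_mul,
        PowerSeries.coeff_expand_of_not_dvd _ _ _ odd, add_zero,
        show 2 * m + 1 + 1 = 2 * (m + 1) by ring, PowerSeries.coeff_expand_mul, coeff_evenPart]
  · have odd : ¬ 2 ∣ 2 * m + 1 := by omega
    rw [coeff_succ_X_mul, PowerSeries.coeff_expand_of_not_dvd _ _ _ odd, zero_add,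
      PowerSeries.coeff_expand_mul, coeff_oddPart]

lemma oddPart_expand_two_add (f g : R⟦X⟧) :
    oddPart (expand 2 two_ne_zero f + X * expand 2 two_ne_zero g) = g := by
  ext n
  have odd : ¬ 2 ∣ 2 * n + 1 := by omega
  rw [coeff_oddPart, map_add, coeff_succ_X_mul, PowerSeries.coeff_expand_of_not_dvd _ _ _ odd,
    zero_add, PowerSeries.coeff_expand_mul]

lemma oddPart_expand_two_mul (f g : R⟦X⟧) :
    oddPart (expand 2 two_ne_zero f * g) = f * oddPart g := by
  have split : expand 2 two_ne_zero f * g = expand 2 two_ne_zero (f * evenPart g) +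
      X * expand 2 two_ne_zero (f * oddPart g) := by
    rw [map_mul, map_mul]
    nth_rw 1 [← evenPart_add_oddPart g]
    ring
  rw [split, oddPart_expand_two_add]

lemma oddPart_sq (f : R⟦X⟧) : oddPart (f ^ 2) = 2 * evenPart f * oddPart f := by
  have split : f ^ 2 = expand 2 two_ne_zero (evenPart f ^ 2 + X * oddPart f ^ 2) +
      X * expand 2 two_ne_zero (2 * evenPart f * oddPart f) := by
    nth_rw 1 [← evenPart_add_oddPart f]
    simp only [map_add, map_mul, map_pow, expand_X, map_ofNat]
    ring
  rw [split, oddPart_expand_two_add]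

lemma oddPart_evalNegHom (f : R⟦X⟧) : oddPart (evalNegHom f) = -oddPart f := by
  ext n
  rw [coeff_oddPart, map_neg, coeff_oddPart, evalNegHom, coeff_rescale,
    (odd_two_mul_add_one n).neg_one_pow, neg_one_mul]

lemma oddPart_weightSeries {ι κ : Type*} {g : ι → ℕ} {h : κ → ℕ} {e : κ → ι}
    (he : Function.Injective e) (odd_mem_range : ∀ i, Odd (g i) → i ∈ Set.range e)
    (hge : ∀ k, g (e k) = 2 * h k + 1) : oddPart (weightSeries g : R⟦X⟧) = weightSeries h := by
  ext n
  have fibre : g ⁻¹' {2 * n + 1} = e '' (h ⁻¹' {n}) := by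
    ext i
    constructor
    · intro hi
      obtain ⟨k, rfl⟩ := odd_mem_range i ⟨n, hi⟩
      refine ⟨k, ?_, rfl⟩
      simp_all
    · rintro ⟨k, rfl, rfl⟩
      exact hge k
  rw [coeff_oddPart, coeff_weightSeries, coeff_weightSeries, fibre,
    Set.ncard_image_of_injective _ he]

end EvenOddParts

section EulerSeries

variable (R : Type*) [CommRing R]

/-- The Euler product `f_k = ∏_{i ≥ 1} (1 - X ^ (k i))`, obtained by expanding the pentagonal
series. -/
noncomputable def eulerSeries (k : ℕ) [NeZero k] : R⟦X⟧ :=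
  expand k (NeZero.ne k) (pentagonalSeries R)

variable {R}

lemma expand_eulerSeries {j k m : ℕ} [NeZero k] [NeZero m] (hj : j ≠ 0) (hjk : j * k = m) :
    expand j hj (eulerSeries R k) = eulerSeries R m := by
  subst hjk
  exact (PowerSeries.expand_mul _ _ _ _ _).symm

lemma map_eulerSeries {S : Type*} [CommRing S] (F : R →+* S) (k : ℕ) [NeZero k] :
    PowerSeries.map F (eulerSeries R k) = eulerSeries S k := by
  rw [eulerSeries, PowerSeries.map_expand, eulerSeries]
  congr 1
  ext n
  by_cases h : ∃ j, pentagonal j = n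
  · obtain ⟨j, rfl⟩ := h
    simp
  · simp [coeff_pentagonalSeries_eq_zero _ h]

lemma constantCoeff_eulerSeries (k : ℕ) [NeZero k] : constantCoeff (eulerSeries R k) = 1 := by
  have h := coeff_pentagonalSeries_pentagonal R 0
  simpa [eulerSeries, pentagonal] using h

lemma isUnit_eulerSeries (k : ℕ) [NeZero k] : IsUnit (eulerSeries R k) := by
  rw [PowerSeries.isUnit_iff_constantCoeff, constantCoeff_eulerSeries]
  exact isUnit_one

lemma hasProd_eulerSeries [TopologicalSpace R] (k : ℕ) [NeZero k] :
    HasProd (fun i => 1 - (X : R⟦X⟧) ^ (k * (i + 1))) (eulerSeries R k) := by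
  rw [HasProd, WithPiTopology.tendsto_iff_coeff_tendsto]
  intro n
  have partial_product (s : Finset ℕ) : ∏ i ∈ s, (1 - (X : R⟦X⟧) ^ (k * (i + 1))) =
      expand k (NeZero.ne k) (∏ i ∈ s, (1 - X ^ (i + 1))) := by
    simp [map_prod, pow_mul]
  simp only [partial_product, eulerSeries, PowerSeries.coeff_expand]
  split_ifs
  · exact tendsto_nhds_of_eventually_eq (coeff_prod_one_sub_X_pow_eventually_eq R _)
  · exact tendsto_const_nhds

lemma pow_eq_expand {p : ℕ} [Fact p.Prime] (f : (ZMod p)⟦X⟧) :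
    f ^ p = expand p (NeZero.ne p) f := by
  have frobenius := MvPowerSeries.map_frobenius_expand (R := ZMod p) p (NeZero.ne p) (f := f)
  rw [ZMod.frobenius_zmod, MvPowerSeries.map_id] at frobenius
  exact frobenius.symm

end EulerSeries

section ThetaSeries

variable (R : Type*) [CommRing R]

/-- Ramanujan's theta function `φ = ∑_{x ∈ ℤ} X ^ (x ^ 2)`. -/
noncomputable def ramanujanPhi : R⟦X⟧ := weightSeries fun x : ℤ => x.natAbs ^ 2

/-- Ramanujan's theta function `ψ`, the generating function of the triangular numbers. Each
triangular number `n (n + 1) / 2` is `x (2 x + 1)` for exactly one integer `x`. -/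
noncomputable def ramanujanPsi : R⟦X⟧ := weightSeries fun x : ℤ => (x * (2 * x + 1)).natAbs

variable {R}

lemma map_ramanujanPhi {S : Type*} [CommRing S] (F : R →+* S) :
    PowerSeries.map F (ramanujanPhi R) = ramanujanPhi S :=
  map_weightSeries F _

lemma map_ramanujanPsi {S : Type*} [CommRing S] (F : R →+* S) :
    PowerSeries.map F (ramanujanPsi R) = ramanujanPsi S :=
  map_weightSeries F _

lemma finite_setOf_natAbs_sq_le (n : ℕ) : {x : ℤ | x.natAbs ^ 2 ≤ n}.Finite := by
  refine (Set.finite_Icc (-(n : ℤ)) n).subset fun x (hx : x.natAbs ^ 2 ≤ n) => ?_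
  have : x.natAbs ≤ n := (Nat.le_self_pow two_ne_zero _).trans hx
  exact ⟨by omega, by omega⟩

lemma natAbs_le_natAbs_triangle (x : ℤ) : x.natAbs ≤ (x * (2 * x + 1)).natAbs := by
  rw [Int.natAbs_mul]
  exact Nat.le_mul_of_pos_right _ (by omega)

lemma finite_setOf_natAbs_triangle_le (n : ℕ) : {x : ℤ | (x * (2 * x + 1)).natAbs ≤ n}.Finite := by
  refine (Set.finite_Icc (-(n : ℤ)) n).subset fun x (hx : (x * (2 * x + 1)).natAbs ≤ n) => ?_
  have := (natAbs_le_natAbs_triangle x).trans hx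
  exact ⟨by omega, by omega⟩

lemma map_evalNegHom {S : Type*} [CommRing S] (F : R →+* S) (f : R⟦X⟧) :
    PowerSeries.map F (evalNegHom f) = evalNegHom (PowerSeries.map F f) := by
  rw [evalNegHom, evalNegHom, ← rescale_map, map_neg, map_one]

lemma evalNegHom_of_charTwo [CharP R 2] (f : R⟦X⟧) : evalNegHom f = f := by
  rw [evalNegHom, CharTwo.neg_eq, rescale_one, RingHom.id_apply]

lemma evalNegHom_expand {k : ℕ} (hk : Odd k) (f : R⟦X⟧) :
    evalNegHom (expand k hk.pos.ne' f) = expand k hk.pos.ne' (evalNegHom f) := by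
  ext n
  rw [evalNegHom, coeff_rescale, PowerSeries.coeff_expand, PowerSeries.coeff_expand]
  split_ifs with h
  · obtain ⟨m, rfl⟩ := h
    rw [Nat.mul_div_cancel_left m hk.pos, coeff_rescale, pow_mul, hk.neg_one_pow]
  · exact mul_zero _

end ThetaSeries

section GaussIdentities

variable {R : Type*} [CommRing R]

lemma tendsto_zero_of_X_pow_dvd [TopologicalSpace R] {u : ℕ → R⟦X⟧} (hu : ∀ n, X ^ n ∣ u n) :
    Tendsto u atTop (𝓝 0) := by
  rw [WithPiTopology.tendsto_iff_coeff_tendsto]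
  refine fun d => tendsto_atTop_of_eventually_const (i₀ := d + 1) fun n hn => ?_
  rw [map_zero]
  exact X_pow_dvd_iff.mp (hu n) d hn

lemma hasSum_evalNegHom [TopologicalSpace R] [IsTopologicalRing R] {ι : Type*} {u : ι → R⟦X⟧}
    {f : R⟦X⟧} (h : HasSum u f) : HasSum (fun i => evalNegHom (u i)) (evalNegHom f) := by
  rw [WithPiTopology.hasSum_iff_hasSum_coeff] at h ⊢
  intro n
  simp only [evalNegHom, coeff_rescale]
  exact (h n).mul_left _

lemma evalNegHom_X_pow_sq (m : ℕ) :
    evalNegHom ((X : R⟦X⟧) ^ m ^ 2) = (-1) ^ m * X ^ m ^ 2 := by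
  have same_parity : (-1 : R⟦X⟧) ^ m ^ 2 = (-1) ^ m :=
    neg_one_pow_congr (by simp [Nat.even_pow])
  rw [map_pow, evalNegHom_X, neg_pow, same_parity]

lemma tendsto_partialSum_evalNegHom_ramanujanPhi [TopologicalSpace R] [IsTopologicalRing R] :
    Tendsto (fun n => 1 + 2 * ∑ a ∈ range n, (-1) ^ (a + 1) * (X : R⟦X⟧) ^ (a + 1) ^ 2) atTop
      (𝓝 (evalNegHom (ramanujanPhi R))) := by
  have sum_nat := (hasSum_evalNegHom (hasSum_weightSeries (R := R)
    finite_setOf_natAbs_sq_le)).nat_add_neg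
  have sum_succ := ((hasSum_nat_add_iff' 1).mpr sum_nat).tendsto_sum_nat.const_add 1
  convert sum_succ using 2 with n
  · rw [mul_sum]
    congr 1
    refine sum_congr rfl fun a _ => ?_
    rw [Int.natAbs_neg, Int.natAbs_natCast, evalNegHom_X_pow_sq]
    ring
  · simp [ramanujanPhi]

lemma tendsto_partialSum_ramanujanPsi [TopologicalSpace R] :
    Tendsto (fun n => ∑ a ∈ range n,
      ((X : R⟦X⟧) ^ (a * (2 * a + 1)) + X ^ ((a + 1) * (2 * a + 1)))) atTop
      (𝓝 (ramanujanPsi R)) := by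
  refine (hasSum_weightSeries (R := R)
    finite_setOf_natAbs_triangle_le).nat_add_neg_add_one.tendsto_sum_nat.congr fun n => ?_
  refine sum_congr rfl fun a _ => ?_
  have neg_index : -((a : ℤ) + 1) * (2 * -((a : ℤ) + 1) + 1) = ((a + 1) * (2 * a + 1) : ℕ) := by
    push_cast
    ring
  rw [neg_index, Int.natAbs_natCast]
  norm_cast

lemma X_pow_dvd_sum_shanksSquareTerm (n : ℕ) :
    (X : R⟦X⟧) ^ n ∣ ∑ s ∈ range n, shanksSquareTerm X n s := by
  refine dvd_sum fun s _ => ?_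
  have exponent : n ≤ (s + 1) * (n + 1) := by nlinarith
  exact ((pow_dvd_pow X exponent).mul_left _).mul_right _

lemma X_pow_dvd_sum_shanksTriangleTerm_sub (n : ℕ) :
    (X : R⟦X⟧) ^ n ∣ ∑ s ∈ range n, shanksTriangleTerm X n s -
      ∏ k ∈ range n, (1 - X ^ (2 * (k + 1))) := by
  rcases n with - | n
  · simp
  · rw [sum_range_succ', shanksTriangleTerm, range_zero, prod_empty, zero_mul, pow_zero, one_mul,
      mul_one, ← range_eq_Ico, add_sub_cancel_right]
    refine dvd_sum fun s _ => ?_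
    have exponent : n + 1 ≤ (s + 1) * (2 * (n + 1) + 1) := by nlinarith
    exact (pow_dvd_pow X exponent).mul_right _

theorem evalNegHom_ramanujanPhi_mul_eulerSeries_two :
    evalNegHom (ramanujanPhi R) * eulerSeries R 2 = eulerSeries R 1 ^ 2 := by
  let : TopologicalSpace R := ⊥
  have : DiscreteTopology R := ⟨rfl⟩
  have lhs := (tendsto_partialSum_evalNegHom_ramanujanPhi (R := R)).mul
    (hasProd_eulerSeries 2).tendsto_prod_nat
  have euler := (hasProd_eulerSeries (R := R) 1).tendsto_prod_nat
  have error := (tendsto_zero_of_X_pow_dvd (X_pow_dvd_sum_shanksSquareTerm (R := R))).mul euler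
  have rhs := (euler.pow 2).add error
  rw [zero_mul, add_zero] at rhs
  refine tendsto_nhds_unique lhs (rhs.congr fun n => ?_)
  have product : ∏ k ∈ range n, (1 - (X : R⟦X⟧) ^ (2 * (k + 1))) =
      (∏ k ∈ range n, (1 + X ^ (k + 1))) * ∏ k ∈ range n, (1 - X ^ (k + 1)) := by
    rw [← prod_mul_distrib]
    exact prod_congr rfl fun k _ => by ring
  simp only [product, one_mul]
  linear_combination -(∏ k ∈ range n, (1 - (X : R⟦X⟧) ^ (k + 1))) * shanks_square (X : R⟦X⟧) n

lemma prod_range_two_mul_one_sub_pow (x : R) (n : ℕ) :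
    ∏ k ∈ range (2 * n), (1 - x ^ (k + 1)) =
      (∏ k ∈ range n, (1 - x ^ (2 * k + 1))) * ∏ k ∈ range n, (1 - x ^ (2 * (k + 1))) := by
  induction n with
  | zero => simp
  | succ n ih =>
    rw [mul_add_one, prod_range_succ, prod_range_succ, ih, prod_range_succ, prod_range_succ]
    ring

theorem ramanujanPsi_mul_eulerSeries_one :
    ramanujanPsi R * eulerSeries R 1 = eulerSeries R 2 ^ 2 := by
  let : TopologicalSpace R := ⊥
  have : DiscreteTopology R := ⟨rfl⟩
  have euler_one := (hasProd_eulerSeries (R := R) 1).tendsto_prod_nat.comp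
    (tendsto_id.const_mul_atTop' two_pos)
  have lhs := (tendsto_partialSum_ramanujanPsi (R := R)).mul euler_one
  have euler_two := (hasProd_eulerSeries (R := R) 2).tendsto_prod_nat
  have error := (tendsto_zero_of_X_pow_dvd
    (X_pow_dvd_sum_shanksTriangleTerm_sub (R := R))).mul euler_two
  have rhs := (euler_two.pow 2).add error
  rw [zero_mul, add_zero] at rhs
  refine tendsto_nhds_unique lhs (rhs.congr fun n => ?_)
  simp only [Function.comp_apply, id_eq, one_mul, prod_range_two_mul_one_sub_pow]
  linear_combination -(∏ k ∈ range n, (1 - (X : R⟦X⟧) ^ (2 * (k + 1)))) *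
    shanks_triangle (X : R⟦X⟧) n

end GaussIdentities

section Dissections

variable {R : Type*} [CommRing R]

lemma natCast_natAbs_triangle (x : ℤ) : ((x * (2 * x + 1)).natAbs : ℤ) = x * (2 * x + 1) := by
  refine Int.natAbs_of_nonneg ?_
  rcases le_or_gt 0 x with h | h <;> nlinarith

lemma ramanujanPhi_mul_expand {k : ℕ} (hk : k ≠ 0) :
    ramanujanPhi R * expand k hk (ramanujanPhi R) =
      weightSeries fun p : ℤ × ℤ => p.1.natAbs ^ 2 + k * p.2.natAbs ^ 2 := by
  rw [ramanujanPhi, expand_weightSeries]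
  exact weightSeries_mul finite_setOf_natAbs_sq_le
    (finite_setOf_mul_le hk finite_setOf_natAbs_sq_le)

lemma ramanujanPsi_mul_expand {k : ℕ} (hk : k ≠ 0) :
    ramanujanPsi R * expand k hk (ramanujanPsi R) = weightSeries fun p : ℤ × ℤ =>
      (p.1 * (2 * p.1 + 1)).natAbs + k * (p.2 * (2 * p.2 + 1)).natAbs := by
  rw [ramanujanPsi, expand_weightSeries]
  exact weightSeries_mul finite_setOf_natAbs_triangle_le
    (finite_setOf_mul_le hk finite_setOf_natAbs_triangle_le)

lemma ramanujanPhi_mul_expand_ramanujanPsi {k : ℕ} (hk : k ≠ 0) :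
    ramanujanPhi R * expand k hk (ramanujanPsi R) = weightSeries fun p : ℤ × ℤ =>
      p.1.natAbs ^ 2 + k * (p.2 * (2 * p.2 + 1)).natAbs := by
  rw [ramanujanPhi, ramanujanPsi, expand_weightSeries]
  exact weightSeries_mul finite_setOf_natAbs_sq_le
    (finite_setOf_mul_le hk finite_setOf_natAbs_triangle_le)

/-- The parametrisation `(j, k) ↦ ±(j + 3 k + 1, j - k)` of the integer points `(x, y)` with `x - y`
odd; the sign is `+` on the left summand and `-` on the right one. It carries both `x ^ 2 + 3 y ^ 2`
and `x (2 x + 1) + 3 y (2 y + 1)` to diagonal forms. -/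
def oddDiffPoint : (ℤ × ℤ) ⊕ (ℤ × ℤ) → ℤ × ℤ :=
  Sum.elim (fun p => (p.1 + 3 * p.2 + 1, p.1 - p.2)) fun p => (-(p.1 + 3 * p.2 + 1), -(p.1 - p.2))

lemma oddDiffPoint_injective : Function.Injective oddDiffPoint := by
  rintro (⟨j, k⟩ | ⟨j, k⟩) (⟨j', k'⟩ | ⟨j', k'⟩) h <;>
    simp only [oddDiffPoint, Sum.elim_inl, Sum.elim_inr, Prod.mk.injEq, Sum.inl.injEq,
      Sum.inr.injEq, reduceCtorEq] at h ⊢ <;> omega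

lemma mem_range_oddDiffPoint {p : ℤ × ℤ} (hp : Odd (p.1 - p.2)) : p ∈ Set.range oddDiffPoint := by
  obtain ⟨x, y⟩ := p
  obtain ⟨d, hd⟩ : ∃ d, x - y = 2 * d + 1 := hp
  rcases d.even_or_odd' with ⟨k, rfl | rfl⟩
  · exact ⟨.inl (y + k, k), Prod.ext (by simp [oddDiffPoint]; omega) (by simp [oddDiffPoint])⟩
  · exact ⟨.inr (-y - k - 1, -k - 1),
      Prod.ext (by simp [oddDiffPoint]; omega) (by simp [oddDiffPoint]; omega)⟩

theorem oddPart_ramanujanPhi_mul_expand_three :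
    oddPart (ramanujanPhi R * expand 3 three_ne_zero (ramanujanPhi R)) =
      2 * (ramanujanPsi R * expand 3 three_ne_zero (ramanujanPsi R)) := by
  have finite_fibres := finite_setOf_add_le finite_setOf_natAbs_triangle_le
    (finite_setOf_mul_le three_ne_zero finite_setOf_natAbs_triangle_le)
  rw [ramanujanPhi_mul_expand, ramanujanPsi_mul_expand, two_mul,
    ← weightSeries_sumElim finite_fibres finite_fibres]
  refine oddPart_weightSeries oddDiffPoint_injective (fun p hp => ?_) ?_
  · refine mem_range_oddDiffPoint ?_
    simpa [parity_simps, Nat.odd_pow_iff] using hp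
  · rintro (⟨j, k⟩ | ⟨j, k⟩) <;> simp only [oddDiffPoint, Sum.elim_inl, Sum.elim_inr] <;> zify <;>
      simp only [← Int.natCast_natAbs, Int.natAbs_sq, natCast_natAbs_triangle] <;> ring

lemma bijective_odd_even_index : Function.Bijective
    (Sum.elim (fun p => (2 * p.1 + 1, p.2)) fun p => (2 * p.1, p.2) :
      (ℤ × ℤ) ⊕ (ℤ × ℤ) → ℤ × ℤ) := by
  constructor
  · rintro (⟨j, k⟩ | ⟨j, k⟩) (⟨j', k'⟩ | ⟨j', k'⟩) h <;>
    simp only [Sum.elim_inl, Sum.elim_inr, Prod.mk.injEq, Sum.inl.injEq,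
      Sum.inr.injEq, reduceCtorEq] at h ⊢ <;> omega
  · rintro ⟨x, k⟩
    rcases x.even_or_odd' with ⟨j, rfl | rfl⟩
    · exact ⟨.inr (j, k), rfl⟩
    · exact ⟨.inl (j, k), rfl⟩

theorem oddPart_ramanujanPsi_mul_expand_three :
    oddPart (ramanujanPsi R * expand 3 three_ne_zero (ramanujanPsi R)) =
      ramanujanPhi R * expand 6 (by norm_num) (ramanujanPsi R) := by
  rw [ramanujanPsi_mul_expand, ramanujanPhi_mul_expand_ramanujanPsi]
  refine (oddPart_weightSeries oddDiffPoint_injective (fun p hp => ?_) ?_).trans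
    (weightSeries_comp_bijective bijective_odd_even_index _)
  · refine mem_range_oddDiffPoint ?_
    simpa [parity_simps, Int.odd_mul, show ¬ Odd (2 : ℤ) by decide] using hp
  · rintro (⟨j, k⟩ | ⟨j, k⟩) <;>
      simp only [oddDiffPoint, Sum.elim_inl, Sum.elim_inr, Function.comp_apply] <;> zify <;>
      simp only [← Int.natCast_natAbs, Int.natAbs_sq, natCast_natAbs_triangle] <;> ring

end Dissections

section MultisetSeries

variable {R : Type*} [CommRing R] {α : Type*} {w : α → ℕ}

lemma weightSeries_of_subsingleton {ι : Type*} [Subsingleton ι] (g : ι → ℕ) (i : ι) :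
    (weightSeries g : R⟦X⟧) = X ^ g i := by
  let : TopologicalSpace R := ⊥
  have : DiscreteTopology R := ⟨rfl⟩
  exact (hasSum_weightSeries fun _ => Set.toFinite _).unique
    (hasSum_single i fun j hj => (hj (Subsingleton.elim j i)).elim)

lemma weightSeries_const_add {ι : Type*} (c : ℕ) (g : ι → ℕ) :
    (weightSeries (fun i => c + g i) : R⟦X⟧) = X ^ c * weightSeries g := by
  ext n
  rw [coeff_X_pow_mul', coeff_weightSeries]
  split_ifs with h
  · rw [coeff_weightSeries]
    congr 2
    ext i
    simp only [Set.mem_preimage, Set.mem_singleton_iff]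
    omega
  · have empty : (fun i => c + g i) ⁻¹' {n} = ∅ :=
      Set.eq_empty_of_forall_notMem fun i hi => h (hi ▸ Nat.le_add_right c (g i))
    rw [empty, Set.ncard_empty, Nat.cast_zero]

/-- The generating function, by total weight, of the finite multisets of elements of `S`. -/
noncomputable def multisetSeries (S : Set α) (w : α → ℕ) : R⟦X⟧ :=
  weightSeries fun M : {M : Multiset α // ∀ x ∈ M, x ∈ S} => (M.1.map w).sum

lemma coeff_multisetSeries (S : Set α) (w : α → ℕ) (n : ℕ) :
    coeff n (multisetSeries S w : R⟦X⟧) =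
      ({M : Multiset α | (∀ x ∈ M, x ∈ S) ∧ (M.map w).sum = n}.ncard : R) := by
  rw [multisetSeries, coeff_weightSeries, ← Set.ncard_image_of_injective _ Subtype.val_injective]
  congr 2
  ext M
  simp [and_comm]

lemma weight_le_sum_map {M : Multiset α} {x : α} (hx : x ∈ M) : w x ≤ (M.map w).sum :=
  Multiset.le_sum_of_mem (Multiset.mem_map_of_mem w hx)

lemma card_le_sum_map {M : Multiset α} (hw : ∀ x ∈ M, 0 < w x) : M.card ≤ (M.map w).sum := by
  have one_le : ∀ y ∈ M.map w, 1 ≤ y := by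
    simpa [Nat.one_le_iff_ne_zero, Nat.pos_iff_ne_zero] using hw
  simpa using Multiset.card_nsmul_le_sum one_le

lemma finite_setOf_sum_map_le {S : Finset α} (hw : ∀ x ∈ S, 0 < w x) (n : ℕ) :
    {M : {M : Multiset α // ∀ x ∈ M, x ∈ (S : Set α)} | (M.1.map w).sum ≤ n}.Finite := by
  classical
  refine ((Set.finite_Iic (n • S.val)).preimage Subtype.val_injective.injOn).subset ?_
  rintro ⟨M, hM⟩ (weight_le : (M.map w).sum ≤ n)
  refine Multiset.le_iff_count.mpr fun x => ?_
  by_cases hx : x ∈ M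
  · rw [Multiset.count_nsmul, Multiset.count_eq_one_of_mem S.nodup (hM x hx), mul_one]
    exact (Multiset.count_le_card x M).trans
      ((card_le_sum_map fun y hy => hw y (hM y hy)).trans weight_le)
  · rw [Multiset.count_eq_zero_of_notMem hx]
    exact Nat.zero_le _

lemma multisetSeries_insert [DecidableEq α] {S : Finset α} {a : α} (ha : a ∉ S)
    (hw : ∀ x ∈ insert a S, 0 < w x) :
    (multisetSeries (insert a S : Finset α) w : R⟦X⟧) =
      multisetSeries S w + X ^ w a * multisetSeries (insert a S : Finset α) w := by
  let cons : {M : Multiset α // ∀ x ∈ M, x ∈ (S : Set α)} ⊕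
      {M : Multiset α // ∀ x ∈ M, x ∈ ((insert a S : Finset α) : Set α)} →
      {M : Multiset α // ∀ x ∈ M, x ∈ ((insert a S : Finset α) : Set α)} :=
    Sum.elim (fun M => ⟨M.1, fun x hx => mem_insert_of_mem (M.2 x hx)⟩)
      fun M => ⟨a ::ₘ M.1, by simpa using M.2⟩
  have cons_bijective : Function.Bijective cons := by
    constructor
    · rintro (⟨M, hM⟩ | ⟨M, hM⟩) (⟨M', hM'⟩ | ⟨M', hM'⟩) h
      · simpa [cons] using h
      · obtain rfl : M = a ::ₘ M' := congrArg Subtype.val h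
        exact (ha (hM a (Multiset.mem_cons_self a M'))).elim
      · obtain rfl : a ::ₘ M = M' := congrArg Subtype.val h
        exact (ha (hM' a (Multiset.mem_cons_self a M))).elim
      · simpa [cons] using h
    · rintro ⟨M, hM⟩
      by_cases mem : a ∈ M
      · obtain ⟨M', rfl⟩ := Multiset.exists_cons_of_mem mem
        exact ⟨Sum.inr ⟨M', fun x hx => hM x (Multiset.mem_cons_of_mem hx)⟩, rfl⟩
      · refine ⟨Sum.inl ⟨M, fun x hx => ?_⟩, rfl⟩
        exact mem_of_mem_insert_of_ne (hM x hx) fun h => mem (h ▸ hx)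
  have finite_weight := finite_setOf_sum_map_le hw
  rw [multisetSeries, multisetSeries, ← weightSeries_const_add, ← weightSeries_sumElim
    (finite_setOf_sum_map_le fun x hx => hw x (mem_insert_of_mem hx))
    (fun n => (finite_weight n).subset fun M hM => (Nat.le_add_left _ _).trans hM)]
  refine (weightSeries_comp_bijective cons_bijective _).symm.trans (congrArg _ ?_)
  ext (M | M) <;> simp [cons]

theorem multisetSeries_mul_prod {S : Finset α} (hw : ∀ x ∈ S, 0 < w x) :
    (multisetSeries S w : R⟦X⟧) * ∏ x ∈ S, (1 - X ^ w x) = 1 := by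
  classical
  induction S using Finset.induction_on with
  | empty =>
    have eq_zero : ∀ M : {M : Multiset α // ∀ x ∈ M, x ∈ ((∅ : Finset α) : Set α)}, M.1 = 0 :=
      fun M => Multiset.eq_zero_of_forall_notMem fun x hx => by simpa using M.2 x hx
    have : Subsingleton {M : Multiset α // ∀ x ∈ M, x ∈ ((∅ : Finset α) : Set α)} :=
      ⟨fun M N => Subtype.ext ((eq_zero M).trans (eq_zero N).symm)⟩
    rw [multisetSeries, weightSeries_of_subsingleton _ ⟨0, by simp⟩]
    simp
  | insert a S ha ih =>
    have recursion := multisetSeries_insert (R := R) ha hw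
    rw [prod_insert ha]
    linear_combination ih (fun x hx => hw x (mem_insert_of_mem hx)) +
      (∏ x ∈ S, (1 - (X : R⟦X⟧) ^ w x)) * recursion

lemma tendsto_multisetSeries [TopologicalSpace R] {P : Set α} {S : ℕ → Finset α}
    (hS : ∀ N x, w x ≤ N → (x ∈ S N ↔ x ∈ P)) :
    Tendsto (fun N => (multisetSeries (S N : Set α) w : R⟦X⟧)) atTop (𝓝 (multisetSeries P w)) := by
  rw [WithPiTopology.tendsto_iff_coeff_tendsto]
  refine fun n => tendsto_atTop_of_eventually_const (i₀ := n) fun N hN => ?_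
  rw [coeff_multisetSeries, coeff_multisetSeries]
  congr 2
  ext M
  refine and_congr_left fun weight_eq => forall₂_congr fun x hx => hS N x ?_
  exact (weight_le_sum_map hx).trans (weight_eq.trans_le hN)

end MultisetSeries

section ColoredRegular

variable {R : Type*} [CommRing R]

lemma hasProd_ite_dvd [TopologicalSpace R] (k : ℕ) [NeZero k] :
    HasProd (fun j => if k ∣ j + 1 then 1 - (X : R⟦X⟧) ^ (j + 1) else 1) (eulerSeries R k) := by
  have pos := NeZero.pos k
  have index_succ (i : ℕ) : k * (i + 1) - 1 + 1 = k * (i + 1) :=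
    Nat.sub_add_cancel (Nat.mul_pos pos i.succ_pos)
  have injective : Function.Injective fun i => k * (i + 1) - 1 := fun i j h => by
    have := congrArg (· + 1) h
    simp only [index_succ] at this
    exact Nat.succ_injective (Nat.eq_of_mul_eq_mul_left pos this)
  refine (injective.hasProd_iff fun j hj => if_neg ?_).mp ?_
  · rintro ⟨_ | i, hi⟩
    · omega
    · exact hj ⟨i, by simp only [← hi, Nat.add_sub_cancel]⟩
  · convert hasProd_eulerSeries (R := R) k using 2 with i
    simp [index_succ]

lemma prod_not_dvd_mul {A : Type*} [CommMonoid A] (u : ℕ → A) (l m N : ℕ) :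
    (∏ j ∈ range N with ¬ l ∣ j + 1 ∧ ¬ m ∣ j + 1, u j) *
        ((∏ j ∈ range N, if l ∣ j + 1 then u j else 1) *
          ∏ j ∈ range N, if m ∣ j + 1 then u j else 1) =
      (∏ j ∈ range N, u j) * ∏ j ∈ range N, if l.lcm m ∣ j + 1 then u j else 1 := by
  rw [prod_filter]
  simp only [← prod_mul_distrib, Nat.lcm_dvd_iff]
  refine prod_congr rfl fun j _ => ?_
  by_cases hl : l ∣ j + 1 <;> by_cases hm : m ∣ j + 1 <;> simp [hl, hm]

/-- The colored parts of size at most `N`, encoded as (part, color) pairs, from which a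
`k`-colored partition counted by `coloredRegular k l m` is built. -/
def coloredParts (k l m N : ℕ) : Finset (ℕ × ℕ) :=
  {j ∈ range N | ¬ l ∣ j + 1 ∧ ¬ m ∣ j + 1}.map (addRightEmbedding 1) ×ˢ range k

lemma mem_coloredParts {k l m N : ℕ} {x : ℕ × ℕ} :
    x ∈ coloredParts k l m N ↔ x.1 ≤ N ∧ ¬ l ∣ x.1 ∧ ¬ m ∣ x.1 ∧ x.2 < k := by
  rcases x with ⟨_ | j, c⟩ <;> simp [coloredParts, and_assoc]

lemma mk_coloredRegular (k l m : ℕ) :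
    PowerSeries.mk (fun n => (coloredRegular k l m n : R)) =
      multisetSeries {x : ℕ × ℕ | ¬ l ∣ x.1 ∧ ¬ m ∣ x.1 ∧ x.2 < k} Prod.fst := by
  ext n
  rw [coeff_mk, coeff_multisetSeries, ← Nat.card_coe_set_eq]
  rfl

lemma multisetSeries_coloredParts_mul (k l m N : ℕ) :
    (multisetSeries (coloredParts k l m N : Set (ℕ × ℕ)) Prod.fst : R⟦X⟧) *
        ((∏ j ∈ range N, (1 - X ^ (j + 1))) *
          ∏ j ∈ range N, if l.lcm m ∣ j + 1 then 1 - X ^ (j + 1) else 1) ^ k =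
      ((∏ j ∈ range N, if l ∣ j + 1 then 1 - X ^ (j + 1) else 1) *
        ∏ j ∈ range N, if m ∣ j + 1 then 1 - X ^ (j + 1) else 1) ^ k := by
  have parts_pos : ∀ x ∈ coloredParts k l m N, 0 < x.1 := fun x hx =>
    Nat.pos_of_ne_zero fun h => (mem_coloredParts.mp hx).2.1 (h ▸ dvd_zero l)
  have euler_product := multisetSeries_mul_prod (R := R) parts_pos
  rw [coloredParts, prod_product, prod_map] at euler_product
  simp only [prod_const, card_range, prod_pow, addRightEmbedding_apply] at euler_product
  rw [← prod_not_dvd_mul, mul_pow, ← mul_assoc, coloredParts, euler_product, one_mul]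

theorem coloredRegular_mul_eulerSeries (k l m : ℕ) {L : ℕ} [NeZero l] [NeZero m] [NeZero L]
    (hL : l.lcm m = L) :
    PowerSeries.mk (fun n => (coloredRegular k l m n : R)) *
      (eulerSeries R 1 * eulerSeries R L) ^ k = (eulerSeries R l * eulerSeries R m) ^ k := by
  let : TopologicalSpace R := ⊥
  have : DiscreteTopology R := ⟨rfl⟩
  subst hL
  have partitions := tendsto_multisetSeries (R := R) (w := Prod.fst) (S := coloredParts k l m)
    (P := {x | ¬ l ∣ x.1 ∧ ¬ m ∣ x.1 ∧ x.2 < k}) fun N x hx => by simp [mem_coloredParts, hx]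
  have all_parts : HasProd (fun j => 1 - (X : R⟦X⟧) ^ (j + 1)) (eulerSeries R 1) := by
    simpa using hasProd_eulerSeries (R := R) 1
  rw [mk_coloredRegular]
  refine tendsto_nhds_unique (partitions.mul ((all_parts.tendsto_prod_nat.mul
    (hasProd_ite_dvd _).tendsto_prod_nat).pow k)) ?_
  simp only [multisetSeries_coloredParts_mul]
  exact ((hasProd_ite_dvd l).tendsto_prod_nat.mul (hasProd_ite_dvd m).tendsto_prod_nat).pow k

theorem coloredRegular_one {k l m : ℕ} (hl : l ≠ 1) (hm : m ≠ 1) : coloredRegular k l m 1 = k := by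
  have partitions_eq : {M : Multiset (ℕ × ℕ) |
      (∀ x ∈ M, ¬ l ∣ x.1 ∧ ¬ m ∣ x.1 ∧ x.2 < k) ∧ (M.map Prod.fst).sum = 1} =
      (fun c => {(1, c)}) '' Set.Iio k := by
    ext M
    constructor
    · rintro ⟨parts, sum_eq⟩
      have parts_pos : ∀ x ∈ M, 0 < x.1 := fun x hx =>
        Nat.pos_of_ne_zero fun h => (parts x hx).1 (h ▸ dvd_zero l)
      have card_le : M.card ≤ 1 := sum_eq ▸ card_le_sum_map parts_pos
      obtain rfl | ⟨⟨j, c⟩, rfl⟩ : M = 0 ∨ ∃ x, M = {x} := by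
        rwa [← Multiset.card_eq_zero, ← Multiset.card_eq_one, ← Nat.le_one_iff_eq_zero_or_eq_one]
      · simp at sum_eq
      · obtain rfl : j = 1 := by simpa using sum_eq
        exact ⟨c, (parts _ (Multiset.mem_singleton_self _)).2.2, rfl⟩
    · rintro ⟨c, hc, rfl⟩
      simp_all
  rw [coloredRegular, ← Set.coe_ofPred, Nat.card_coe_set_eq, partitions_eq,
    Set.ncard_image_of_injective _ fun c d h => by simpa using h]
  simp [Set.ncard_eq_toFinset_card']

end ColoredRegular

section ModThree

lemma mk_coloredRegular_four_three_four_mul_mod_three :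
    PowerSeries.mk (fun n => (coloredRegular 4 3 4 n : ZMod 3)) * eulerSeries (ZMod 3) 4 ^ 8 =
      eulerSeries (ZMod 3) 1 ^ 8 := by
  have frobenius (k m : ℕ) [NeZero k] [NeZero m] (hkm : 3 * k = m) :
      eulerSeries (ZMod 3) m = eulerSeries (ZMod 3) k ^ 3 := by
    rw [pow_eq_expand, expand_eulerSeries _ hkm]
  have euler_product := coloredRegular_mul_eulerSeries (R := ZMod 3) 4 3 4 (L := 12) (by decide)
  rw [frobenius 4 12 rfl, frobenius 1 3 rfl] at euler_product
  refine (((isUnit_eulerSeries 1).pow 4).mul ((isUnit_eulerSeries 4).pow 4)).mul_right_cancel ?_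
  linear_combination euler_product

theorem oddPart_coloredRegular_mod_three :
    oddPart (PowerSeries.mk fun n => (coloredRegular 4 3 4 n : ZMod 3)) = 1 := by
  set G := PowerSeries.mk fun n => (coloredRegular 4 3 4 n : ZMod 3)
  set e₁ := eulerSeries (ZMod 3) 1
  set e₂ := eulerSeries (ZMod 3) 2
  set φ := ramanujanPhi (ZMod 3)
  set ψ := ramanujanPsi (ZMod 3)
  have cube (f : (ZMod 3)⟦X⟧) : f * expand 3 three_ne_zero f = f ^ 4 := by
    rw [pow_succ' f 3, pow_eq_expand]
  have dissection : expand 2 two_ne_zero (e₂ ^ 8) * G =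
      expand 2 two_ne_zero (e₁ ^ 4) * evalNegHom (φ * expand 3 three_ne_zero φ) := by
    rw [map_pow, map_pow, expand_eulerSeries (m := 4) _ rfl, expand_eulerSeries (m := 2) _ rfl,
      cube, map_pow, mul_comm, mk_coloredRegular_four_three_four_mul_mod_three, ← mul_pow, mul_comm,
      evalNegHom_ramanujanPhi_mul_eulerSeries_two, ← pow_mul]
  have odd_parts := congrArg oddPart dissection
  rw [oddPart_expand_two_mul, oddPart_expand_two_mul, oddPart_evalNegHom,
    oddPart_ramanujanPhi_mul_expand_three, cube] at odd_parts
  have neg_two : (-2 : (ZMod 3)⟦X⟧) = 1 := by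
    rw [← map_ofNat (C : ZMod 3 →+* (ZMod 3)⟦X⟧) 2, ← map_neg, ← map_one C]
    rfl
  refine ((isUnit_eulerSeries 2).pow 8).mul_left_cancel ?_
  calc e₂ ^ 8 * oddPart G = -2 * (ψ * e₁) ^ 4 := by rw [odd_parts]; ring
    _ = e₂ ^ 8 * 1 := by rw [neg_two, ramanujanPsi_mul_eulerSeries_one]; ring

end ModThree

section ModTwo

lemma eulerSeries_sq_mod_two {k m : ℕ} [NeZero k] [NeZero m] (hkm : 2 * k = m) :
    eulerSeries (ZMod 2) k ^ 2 = eulerSeries (ZMod 2) m := by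
  rw [pow_eq_expand, expand_eulerSeries _ hkm]

lemma ramanujanPhi_mod_two : ramanujanPhi (ZMod 2) = 1 := by
  have gauss := evalNegHom_ramanujanPhi_mul_eulerSeries_two (R := ZMod 2)
  rw [evalNegHom_of_charTwo, eulerSeries_sq_mod_two (m := 2) rfl] at gauss
  exact (isUnit_eulerSeries 2).mul_right_cancel (by rw [gauss, one_mul])

lemma ramanujanPsi_mod_two : ramanujanPsi (ZMod 2) = eulerSeries (ZMod 2) 1 ^ 3 := by
  have gauss := ramanujanPsi_mul_eulerSeries_one (R := ZMod 2)
  rw [← eulerSeries_sq_mod_two (k := 1) rfl] at gauss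
  refine (isUnit_eulerSeries 1).mul_right_cancel ?_
  linear_combination gauss

lemma oddPart_ramanujanPsi_mul_expand_three_mod_two :
    oddPart (ramanujanPsi (ZMod 2) * expand 3 three_ne_zero (ramanujanPsi (ZMod 2))) =
      expand 6 (by norm_num) (ramanujanPsi (ZMod 2)) := by
  rw [oddPart_ramanujanPsi_mul_expand_three, ramanujanPhi_mod_two, one_mul]

lemma exists_eq_add_nsmul {n : ℕ} {f g : ℤ⟦X⟧}
    (h : PowerSeries.map (Int.castRingHom (ZMod n)) f =
      PowerSeries.map (Int.castRingHom (ZMod n)) g) : ∃ t, f = g + n • t := by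
  have dvd (i : ℕ) : (n : ℤ) ∣ coeff i f - coeff i g := by
    rw [← ZMod.intCast_zmod_eq_zero_iff_dvd, Int.cast_sub, sub_eq_zero]
    simpa using congrArg (coeff i) h
  choose t ht using dvd
  refine ⟨PowerSeries.mk t, ?_⟩
  ext i
  rw [map_add, map_nsmul, coeff_mk, nsmul_eq_mul, ← ht]
  ring

end ModTwo

section ModEight

lemma exists_evalNegHom_ramanujanPhi_pow_four :
    ∃ s, evalNegHom (ramanujanPhi ℤ) ^ 4 = 1 + 8 * s := by
  have mod_two : PowerSeries.map (Int.castRingHom (ZMod 2)) (evalNegHom (ramanujanPhi ℤ)) =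
      PowerSeries.map (Int.castRingHom (ZMod 2)) 1 := by
    rw [map_evalNegHom, map_ramanujanPhi, ramanujanPhi_mod_two, map_one, map_one]
  obtain ⟨t, ht⟩ := exists_eq_add_nsmul mod_two
  refine ⟨t + 3 * t ^ 2 + 4 * t ^ 3 + 2 * t ^ 4, ?_⟩
  rw [ht, nsmul_eq_mul]
  push_cast
  ring

/-- The product `φ(-q) φ(-q³)`. Up to a factor in even powers of `q`, its square is congruent
modulo `8` to the generating function of `coloredRegular 4 3 4`. -/
noncomputable def thetaProduct : ℤ⟦X⟧ :=
  evalNegHom (ramanujanPhi ℤ * expand 3 three_ne_zero (ramanujanPhi ℤ))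

lemma oddPart_thetaProduct : oddPart thetaProduct =
    -(2 * (ramanujanPsi ℤ * expand 3 three_ne_zero (ramanujanPsi ℤ))) := by
  rw [thetaProduct, oddPart_evalNegHom, oddPart_ramanujanPhi_mul_expand_three]

lemma map_evenPart_thetaProduct_mod_two :
    PowerSeries.map (Int.castRingHom (ZMod 2)) (evenPart thetaProduct) = 1 := by
  have thetaProduct_mod_two : PowerSeries.map (Int.castRingHom (ZMod 2)) thetaProduct = 1 := by
    rw [thetaProduct, map_evalNegHom, map_mul, map_expand, map_ramanujanPhi, ramanujanPhi_mod_two,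
      map_one, mul_one, map_one]
  rw [map_evenPart, thetaProduct_mod_two]
  ext n
  simp [coeff_evenPart, coeff_one]

lemma mk_coloredRegular_mul_pow_four :
    PowerSeries.mk (fun n => (coloredRegular 4 3 4 n : ℤ)) * evalNegHom (ramanujanPhi ℤ) ^ 4 *
        expand 2 two_ne_zero (eulerSeries ℤ 1 ^ 2 * eulerSeries ℤ 6 ^ 4) =
      expand 2 two_ne_zero (eulerSeries ℤ 3 ^ 2 * eulerSeries ℤ 2 ^ 4) * thetaProduct ^ 2 := by
  have euler_product := coloredRegular_mul_eulerSeries (R := ℤ) 4 3 4 (L := 12) (by decide)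
  have gauss := evalNegHom_ramanujanPhi_mul_eulerSeries_two (R := ℤ)
  have gauss_three := congrArg (expand 3 three_ne_zero) gauss
  rw [map_mul, map_pow, expand_eulerSeries (k := 2) (m := 6) _ rfl,
    expand_eulerSeries (k := 1) (m := 3) _ rfl] at gauss_three
  rw [map_mul, map_mul, map_pow, map_pow, map_pow, map_pow,
    expand_eulerSeries (k := 1) (m := 2) _ rfl, expand_eulerSeries (k := 6) (m := 12) _ rfl,
    expand_eulerSeries (k := 3) (m := 6) _ rfl, expand_eulerSeries (k := 2) (m := 4) _ rfl,
    thetaProduct, map_mul, evalNegHom_expand (by decide : Odd 3)]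
  set G := PowerSeries.mk fun n => (coloredRegular 4 3 4 n : ℤ)
  set θ := evalNegHom (ramanujanPhi ℤ)
  set e := eulerSeries ℤ
  calc G * θ ^ 4 * (e 2 ^ 2 * e 12 ^ 4) = θ ^ 2 * (G * ((θ * e 2) ^ 2 * e 12 ^ 4)) := by ring
    _ = θ ^ 2 * (G * (e 1 * e 12) ^ 4) := by rw [gauss]; ring
    _ = θ ^ 2 * (e 3 ^ 2) ^ 2 * e 4 ^ 4 := by rw [euler_product]; ring
    _ = e 6 ^ 2 * e 4 ^ 4 * (θ * expand 3 three_ne_zero θ) ^ 2 := by rw [← gauss_three]; ring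

theorem exists_oddPart_coloredRegular_eq : ∃ V B,
    oddPart (PowerSeries.mk fun n => (coloredRegular 4 3 4 n : ℤ)) = 4 • V + 8 • B ∧
    eulerSeries ℤ 1 ^ 2 * eulerSeries ℤ 6 ^ 4 * V =
      eulerSeries ℤ 3 ^ 2 * eulerSeries ℤ 2 ^ 4 * (evenPart thetaProduct *
        (ramanujanPsi ℤ * expand 3 three_ne_zero (ramanujanPsi ℤ))) := by
  set G := PowerSeries.mk fun n => (coloredRegular 4 3 4 n : ℤ)
  set u := eulerSeries ℤ 1 ^ 2 * eulerSeries ℤ 6 ^ 4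
  have unit : IsUnit u := ((isUnit_eulerSeries 1).pow 2).mul ((isUnit_eulerSeries 6).pow 4)
  obtain ⟨s, hs⟩ := exists_evalNegHom_ramanujanPhi_pow_four
  obtain ⟨V, hV⟩ := unit.dvd (a := eulerSeries ℤ 3 ^ 2 * eulerSeries ℤ 2 ^ 4 *
    (evenPart thetaProduct * (ramanujanPsi ℤ * expand 3 three_ne_zero (ramanujanPsi ℤ))))
  refine ⟨V, -V - oddPart (G * s), unit.mul_left_cancel ?_, hV.symm⟩
  have dissection : expand 2 two_ne_zero u * (G + 8 • (G * s)) =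
      expand 2 two_ne_zero (eulerSeries ℤ 3 ^ 2 * eulerSeries ℤ 2 ^ 4) * thetaProduct ^ 2 := by
    rw [← mk_coloredRegular_mul_pow_four, hs, nsmul_eq_mul]
    push_cast
    ring
  have odd_parts := congrArg oddPart dissection
  rw [oddPart_expand_two_mul, oddPart_expand_two_mul, oddPart_sq, oddPart_thetaProduct, map_add,
    map_nsmul, nsmul_eq_mul] at odd_parts
  simp only [nsmul_eq_mul]
  push_cast at odd_parts ⊢
  linear_combination odd_parts - 4 * hV

lemma oddPart_oddPart_mod_two {V : (ZMod 2)⟦X⟧}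
    (hV : eulerSeries (ZMod 2) 1 ^ 2 * eulerSeries (ZMod 2) 6 ^ 4 * V =
      eulerSeries (ZMod 2) 3 ^ 2 * eulerSeries (ZMod 2) 2 ^ 4 *
        (ramanujanPsi (ZMod 2) * expand 3 three_ne_zero (ramanujanPsi (ZMod 2)))) :
    oddPart (oddPart V) = expand 6 (by norm_num) (ramanujanPsi (ZMod 2)) := by
  set e₁ := eulerSeries (ZMod 2) 1
  set e₂ := eulerSeries (ZMod 2) 2
  set e₃ := eulerSeries (ZMod 2) 3
  set e₆ := eulerSeries (ZMod 2) 6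
  set ψ := ramanujanPsi (ZMod 2)
  have dissection : expand 2 two_ne_zero (e₃ ^ 3) * V =
      expand 2 two_ne_zero (e₁ ^ 3) * (ψ * expand 3 three_ne_zero ψ) := by
    rw [map_pow, map_pow, expand_eulerSeries (m := 6) _ rfl, expand_eulerSeries (m := 2) _ rfl]
    rw [eulerSeries_sq_mod_two (m := 2) rfl, eulerSeries_sq_mod_two (m := 6) rfl] at hV
    refine ((isUnit_eulerSeries 2).mul (isUnit_eulerSeries 6)).mul_left_cancel ?_
    linear_combination hV
  have odd_parts := congrArg oddPart dissection
  rw [oddPart_expand_two_mul, oddPart_expand_two_mul,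
    oddPart_ramanujanPsi_mul_expand_three_mod_two] at odd_parts
  have psi_eq : ψ = e₁ ^ 3 := ramanujanPsi_mod_two
  have expand_three : expand 3 three_ne_zero ψ = e₃ ^ 3 := by
    rw [psi_eq, map_pow, expand_eulerSeries (m := 3) _ rfl]
  have expand_six : expand 6 (by norm_num) ψ = e₃ ^ 6 := by
    rw [psi_eq, map_pow, expand_eulerSeries (m := 6) _ rfl, ← eulerSeries_sq_mod_two (k := 3) rfl,
      ← pow_mul]
  have oddPart_eq : oddPart V = ψ * expand 3 three_ne_zero ψ := by
    refine ((isUnit_eulerSeries 3).pow 3).mul_left_cancel (odd_parts.trans ?_)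
    rw [expand_six, expand_three, psi_eq]
    ring
  rw [oddPart_eq, oddPart_ramanujanPsi_mul_expand_three_mod_two]

theorem coloredRegular_modEq_four_mul_coeff (n : ℕ) :
    (coloredRegular 4 3 4 (8 * n + 7) : ℤ) ≡
      4 * coeff n (expand 6 (by norm_num) (ramanujanPsi ℤ)) [ZMOD 8] := by
  obtain ⟨V, B, oddPart_eq, hV⟩ := exists_oddPart_coloredRegular_eq
  have V_mod_two := congrArg (PowerSeries.map (Int.castRingHom (ZMod 2))) hV
  simp only [map_mul, map_pow, map_eulerSeries, map_expand, map_ramanujanPsi,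
    map_evenPart_thetaProduct_mod_two, one_mul] at V_mod_two
  have lift : PowerSeries.map (Int.castRingHom (ZMod 2)) (oddPart (oddPart V)) =
      PowerSeries.map (Int.castRingHom (ZMod 2)) (expand 6 (by norm_num) (ramanujanPsi ℤ)) := by
    rw [map_oddPart, map_oddPart, map_expand, map_ramanujanPsi, oddPart_oddPart_mod_two V_mod_two]
  obtain ⟨t, ht⟩ := exists_eq_add_nsmul lift
  have coeff_V := congrArg (coeff n) ht
  have coeff_G := congrArg (coeff (2 * (2 * n + 1) + 1)) oddPart_eq
  simp only [coeff_oddPart, coeff_mk, map_add, map_nsmul] at coeff_V coeff_G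
  rw [show 8 * n + 7 = 2 * (2 * (2 * n + 1) + 1) + 1 by ring, coeff_G, coeff_V, Int.modEq_comm,
    Int.modEq_iff_dvd]
  exact ⟨coeff n t + coeff (2 * (2 * n + 1) + 1) B, by simp only [nsmul_eq_mul]; push_cast; ring⟩

end ModEight

section Congruences

theorem coloredRegular_modEq_zero_mod_eight {n : ℕ} (hn : ¬ 6 ∣ n) :
    coloredRegular 4 3 4 (8 * n + 7) ≡ 0 [MOD 8] := by
  have modEq := coloredRegular_modEq_four_mul_coeff n
  rw [PowerSeries.coeff_expand_of_not_dvd _ _ _ hn, mul_zero] at modEq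
  exact_mod_cast modEq

theorem coloredRegular_modEq_zero_mod_three {n : ℕ} (hn : n ≠ 0) :
    coloredRegular 4 3 4 (2 * n + 1) ≡ 0 [MOD 3] := by
  have coeff_eq := congrArg (coeff n) oddPart_coloredRegular_mod_three
  rw [coeff_oddPart, coeff_mk, coeff_one, if_neg hn] at coeff_eq
  exact (ZMod.natCast_eq_natCast_iff _ _ _).mp (coeff_eq.trans Nat.cast_zero.symm)

theorem stmt_7_general :
    (∀ n : ℕ, ¬ 6 ∣ n → coloredRegular 4 3 4 (8 * n + 7) ≡ 0 [MOD 8]) ∧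
    coloredRegular 4 3 4 1 = 4 ∧
    (∀ n : ℕ, n ≠ 0 → coloredRegular 4 3 4 (2 * n + 1) ≡ 0 [MOD 3]) :=
  ⟨fun _ => coloredRegular_modEq_zero_mod_eight, coloredRegular_one (by norm_num) (by norm_num),
    fun _ => coloredRegular_modEq_zero_mod_three⟩

end Congruences

theorem stmt_7 :
    (∀ n : ℕ, ∀ i ∈ ({2, 3, 4, 5} : Finset ℕ),
      coloredRegular 4 3 4 (48 * n + 8 * i + 7) ≡ 0 [MOD 8]) ∧
    coloredRegular 4 3 4 1 = 4 ∧ coloredRegular 4 3 4 1 ≡ 4 [MOD 3] ∧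
    (∀ n : ℕ, 1 ≤ n → coloredRegular 4 3 4 (2 * n + 1) ≡ 0 [MOD 3]) := by
  obtain ⟨mod_eight, value_one, mod_three⟩ := stmt_7_general
  refine ⟨fun n i hi => ?_, value_one, congrArg (· % 3) value_one,
    fun n hn => mod_three n (by omega)⟩
  have not_dvd : ¬ 6 ∣ 6 * n + i := by
    simp only [mem_insert, mem_singleton] at hi
    omega
  convert mod_eight (6 * n + i) not_dvd using 2
  ring
end

section
/- Let p ≥ 5 be a prime with (−2/p) = −1 (Legendre symbol). Then for all nonnegative integers k and m with p ∤ m, b^4_{3,4}(16·p^{2k+1}·m + 2·p^{2k+2} + 1) ≡ 0 (mod 8) and b^4_{3,4}(48·p^{2k+1}·m + 6·p^{2k+2} + 1) ≡ 0 (mod 8). -/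
/-!
Write `A = ∏ (1 - q ^ j)⁻¹` over the `j` divisible by neither `3` nor `4`, so that
`b^4_{3,4}(n)` is the coefficient of `q ^ n` in `A ^ 4`. Since `(A ^ 4)' = 4 A ^ 3 A'`, for even
`r` the number `b^4_{3,4}(r + 1)` is divisible by `8` if and only if the coefficient of `q ^ r` in
`A ^ 3 A'` is even.

Modulo 2 put `E = ∏ (1 - q ^ n)`, `ψ = ∑ q ^ (n (n + 1) / 2)` and `ψ₃ = ψ(q ^ 3)`. The key identity
is `ψ ψ₃ = ψ ^ 4 + q ψ₃ ^ 4`: the coefficients of `ψ ψ₃` count representations by `x ^ 2 + 3 y ^ 2`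
with `x` and `y` odd, on which multiplication by a cube root of unity in the Eisenstein integers
induces an involution, and the right-hand side counts its fixed points. Combined with the pentagonal
number theorem in the form `q E(q ^ 24) = Θ(q) + Θ(q ^ 9)`, where `Θ = q ψ(q ^ 8)`, it yields
`ψ = E ^ 3` and hence `A ψ₃ = ψ`.

Differentiating `A ψ₃ ^ 2 = ψ ^ 4 + q ψ₃ ^ 4` gives `A' = ψ₃ ^ 2`, so that
`A ^ 3 A' = A ψ ^ 2 = (A ψ ^ 2) ^ 2 + q (ψ ψ₃) ^ 2`. Reading off coefficients along `16 j + 2` and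
`48 j + 6` leaves the coefficient of `q ^ j` in `ψ`, which is nonzero exactly when `8 j + 1` is a
square.
-/

open PowerSeries Finset

section WeightGeneratingFunction

variable {α β : Type*}

/-- The generating function counting the elements of `α` by their weight `w`. It is meaningful when
`w` has finite fibres: `Nat.card` counts an infinite fibre as `0`. -/
noncomputable def weightGenFun (w : α → ℕ) : ℕ⟦X⟧ := .mk fun n => Nat.card {a // w a = n}

lemma weightGenFun_congr {w : α → ℕ} {v : β → ℕ} (e : α ≃ β) (h : ∀ a, v (e a) = w a) :
    weightGenFun w = weightGenFun v := by
  ext n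
  simp only [weightGenFun, coeff_mk]
  exact Nat.card_congr (e.subtypeEquiv fun a => by rw [h])

/-- Splits the pairs of total weight `n` according to the weights of the two components. -/
def weightFiberProdEquiv (w : α → ℕ) (v : β → ℕ) (n : ℕ) :
    {z : α × β // w z.1 + v z.2 = n} ≃
      Σ ij : antidiagonal n, {a // w a = ij.1.1} × {b // v b = ij.1.2} where
  toFun z := ⟨⟨(w z.1.1, v z.1.2), mem_antidiagonal.2 z.2⟩, ⟨z.1.1, rfl⟩, ⟨z.1.2, rfl⟩⟩
  invFun t := ⟨(t.2.1, t.2.2), by rw [t.2.1.2, t.2.2.2, mem_antidiagonal.1 t.1.2]⟩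
  left_inv _ := rfl
  right_inv := by
    rintro ⟨⟨⟨i, j⟩, hij⟩, ⟨a, ha⟩, ⟨b, hb⟩⟩
    obtain rfl : w a = i := ha
    obtain rfl : v b = j := hb
    rfl

variable {w : α → ℕ} {v : β → ℕ} (hw : ∀ n, Finite {a // w a = n})
  (hv : ∀ n, Finite {b // v b = n})
include hw hv

lemma finite_weight_fiber_prod (n : ℕ) : Finite {z : α × β // w z.1 + v z.2 = n} :=
  Finite.of_equiv _ (weightFiberProdEquiv w v n).symm

lemma weightGenFun_prod :
    weightGenFun (fun z : α × β => w z.1 + v z.2) = weightGenFun w * weightGenFun v := by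
  ext n
  simp only [weightGenFun, coeff_mk, coeff_mul]
  rw [Nat.card_congr (weightFiberProdEquiv w v n), Nat.card_sigma]
  simp only [Nat.card_prod]
  exact sum_coe_sort (antidiagonal n) fun ij =>
    Nat.card {a // w a = ij.1} * Nat.card {b // v b = ij.2}

end WeightGeneratingFunction

section ColoredMultisets

/-- The generating function over `R` of the partitions all of whose parts satisfy `P`. -/
noncomputable def restrictedGenFun (R : Type*) [CommSemiring R] (P : ℕ → Prop) [DecidablePred P] :
    R⟦X⟧ :=
  .mk fun n => (#(Nat.Partition.restricted n P) : R)

lemma map_restrictedGenFun {R S : Type*} [CommSemiring R] [CommSemiring S] (f : R →+* S)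
    (P : ℕ → Prop) [DecidablePred P] :
    (restrictedGenFun R P).map f = restrictedGenFun S P := by
  ext n
  simp only [restrictedGenFun, coeff_map, coeff_mk, map_natCast]

/-- Multisets whose elements satisfy `P`: partitions into parts satisfying `P`, of arbitrary
total. If `P 0` holds, they may also contain zeros. -/
abbrev MultisetOf (P : ℕ → Prop) := {U : Multiset ℕ // ∀ i ∈ U, P i}

/-- Multisets of pairs (part, color) with parts satisfying `P` and colors in `{0, …, k - 1}`:
`k`-colored partitions into parts satisfying `P`, of arbitrary total. -/
abbrev ColoredMultiset (P : ℕ → Prop) (k : ℕ) :=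
  {M : Multiset (ℕ × ℕ) // ∀ x ∈ M, P x.1 ∧ x.2 < k}

variable {P : ℕ → Prop}

/-- The number partitioned by a colored multiset. -/
def coloredWeight {k : ℕ} (M : ColoredMultiset P k) : ℕ := (M.1.map Prod.fst).sum

/-- Identifies multisets of sum `n` with partitions of `n`, whose parts are positive by
definition. -/
def restrictedEquiv [DecidablePred P] (hP : ¬ P 0) (n : ℕ) :
    {U : MultisetOf P // U.1.sum = n} ≃ Nat.Partition.restricted n P where
  toFun U := ⟨⟨U.1, fun {i} hi => Nat.pos_of_ne_zero fun h0 => hP (h0 ▸ U.1.2 i hi), U.2⟩,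
    mem_filter.2 ⟨mem_univ _, U.1.2⟩⟩
  invFun q := ⟨⟨q.1.parts, (mem_filter.1 q.2).2⟩, q.1.parts_sum⟩
  left_inv _ := rfl
  right_inv _ := rfl

/-- Separates the parts of the last color `k` from the others. -/
def coloredMultisetSuccEquiv (P : ℕ → Prop) (k : ℕ) :
    ColoredMultiset P (k + 1) ≃ ColoredMultiset P k × MultisetOf P where
  toFun M := (⟨M.1.filter (·.2 < k), fun x hx =>
      ⟨(M.2 x (Multiset.mem_of_mem_filter hx)).1, (Multiset.mem_filter.1 hx).2⟩⟩,
    ⟨(M.1.filter (¬ ·.2 < k)).map Prod.fst, fun i hi => by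
      obtain ⟨x, hx, rfl⟩ := Multiset.mem_map.1 hi
      exact (M.2 x (Multiset.mem_of_mem_filter hx)).1⟩)
  invFun z := ⟨z.1.1 + z.2.1.map (·, k), fun x hx => by
    rcases Multiset.mem_add.1 hx with hx | hx
    · exact ⟨(z.1.2 x hx).1, (z.1.2 x hx).2.trans k.lt_succ_self⟩
    · obtain ⟨i, hi, rfl⟩ := Multiset.mem_map.1 hx
      exact ⟨z.2.2 i hi, k.lt_succ_self⟩⟩
  left_inv M := by
    have hlast : ∀ x ∈ M.1.filter (¬ ·.2 < k), (x.1, k) = x := fun x hx =>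
      Prod.ext rfl (le_antisymm (not_lt.1 (Multiset.mem_filter.1 hx).2)
        (Nat.le_of_lt_succ (M.2 x (Multiset.mem_of_mem_filter hx)).2))
    apply Subtype.ext
    simp only [Multiset.map_map, Function.comp_def, Multiset.map_congr rfl hlast, Multiset.map_id']
    exact Multiset.filter_add_not _ _
  right_inv := by
    rintro ⟨⟨M, hM⟩, ⟨U, hU⟩⟩
    have hlt : M.filter (·.2 < k) = M := Multiset.filter_eq_self.2 fun x hx => (hM x hx).2
    have hnlt : M.filter (k ≤ ·.2) = 0 :=
      Multiset.filter_eq_nil.2 fun x hx => not_le.2 (hM x hx).2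
    simp [Multiset.filter_map, hlt, hnlt]

lemma coloredWeight_succ {k : ℕ} (M : ColoredMultiset P (k + 1)) :
    coloredWeight (coloredMultisetSuccEquiv P k M).1 + (coloredMultisetSuccEquiv P k M).2.1.sum =
      coloredWeight M := by
  simp only [coloredWeight, coloredMultisetSuccEquiv, Equiv.coe_fn_mk]
  rw [← Multiset.sum_add, ← Multiset.map_add, Multiset.filter_add_not]

instance : Unique (ColoredMultiset P 0) where
  default := ⟨0, fun x hx => absurd hx (Multiset.notMem_zero x)⟩
  uniq M := Subtype.ext
    (Multiset.eq_zero_of_forall_notMem fun x hx => Nat.not_lt_zero _ (M.2 x hx).2)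

lemma weightGenFun_coloredWeight_zero : weightGenFun (coloredWeight (P := P) (k := 0)) = 1 := by
  ext n
  rw [weightGenFun, coeff_mk, coeff_one]
  split_ifs with hn
  · subst hn
    have : Nonempty {M : ColoredMultiset P 0 // coloredWeight M = 0} := ⟨⟨default, rfl⟩⟩
    exact Nat.card_unique
  · have : IsEmpty {M : ColoredMultiset P 0 // coloredWeight M = n} :=
      ⟨fun M => hn (by rw [← M.2, Subsingleton.elim M.1 default]; rfl)⟩
    exact Nat.card_of_isEmpty

section
variable (hP : ¬ P 0)
include hP

lemma finite_multisetOf_sum (n : ℕ) : Finite {U : MultisetOf P // U.1.sum = n} := by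
  classical exact Finite.of_equiv _ (restrictedEquiv hP n).symm

lemma finite_coloredWeight (k n : ℕ) : Finite {M : ColoredMultiset P k // coloredWeight M = n} := by
  induction k generalizing n with
  | zero => infer_instance
  | succ k ih =>
    have := finite_weight_fiber_prod ih (finite_multisetOf_sum hP) n
    exact Finite.of_equiv
      {z : ColoredMultiset P k × MultisetOf P // coloredWeight z.1 + z.2.1.sum = n}
      ((coloredMultisetSuccEquiv P k).symm.subtypeEquiv fun z => by
        rw [← coloredWeight_succ, Equiv.apply_symm_apply])

variable [DecidablePred P]

lemma weightGenFun_sum :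
    weightGenFun (fun U : MultisetOf P => U.1.sum) = restrictedGenFun ℕ P := by
  ext n
  rw [weightGenFun, restrictedGenFun, coeff_mk, coeff_mk, Nat.card_congr (restrictedEquiv hP n),
    Nat.card_eq_finsetCard, Nat.cast_id]

lemma weightGenFun_coloredWeight (k : ℕ) :
    weightGenFun (coloredWeight (P := P) (k := k)) = restrictedGenFun ℕ P ^ k := by
  induction k with
  | zero => rw [weightGenFun_coloredWeight_zero, pow_zero]
  | succ k ih =>
    rw [pow_succ, ← ih, ← weightGenFun_sum hP,
      ← weightGenFun_prod (finite_coloredWeight hP k) (finite_multisetOf_sum hP)]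
    exact weightGenFun_congr (coloredMultisetSuccEquiv P k) coloredWeight_succ

end

lemma coloredRegular_eq_coeff (k l m n : ℕ) :
    coloredRegular k l m n = coeff n (restrictedGenFun ℕ (fun i => ¬ l ∣ i ∧ ¬ m ∣ i) ^ k) := by
  rw [← weightGenFun_coloredWeight fun h => h.1 (dvd_zero l), weightGenFun, coeff_mk]
  refine Nat.card_congr ((Equiv.subtypeSubtypeEquivSubtypeInter _
    fun M : Multiset (ℕ × ℕ) => (M.map Prod.fst).sum = n).trans
      (Equiv.subtypeEquivRight fun M => ?_)).symm
  simp only [and_assoc]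

end ColoredMultisets

section Expand

variable {R : Type*} [CommRing R] {k : ℕ}

lemma expand_injective (hk : k ≠ 0) : Function.Injective (expand k hk : R⟦X⟧ → R⟦X⟧) := by
  intro f g hfg
  ext n
  simpa only [coeff_expand_mul] using congrArg (coeff (k * n)) hfg

open PowerSeries.WithPiTopology in
lemma continuous_expand [TopologicalSpace R] (hk : k ≠ 0) :
    Continuous (expand k hk : R⟦X⟧ → R⟦X⟧) := by
  refine continuous_iff_continuousAt.2 fun f => (tendsto_iff_coeff_tendsto ..).2 fun n => ?_
  simp only [coeff_expand]
  split_ifs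
  · exact (continuous_coeff R (n / k)).continuousAt
  · exact tendsto_const_nhds

lemma pow_prime_pow_eq_expand (p : ℕ) [hp : Fact p.Prime] (n : ℕ) (f : (ZMod p)⟦X⟧) :
    f ^ p ^ n = expand (p ^ n) (pow_ne_zero n hp.out.ne_zero) f := by
  have hfrob : iterateFrobenius (ZMod p) p n = RingHom.id _ := by
    ext x
    rw [iterateFrobenius_def, ZMod.pow_card_pow, RingHom.id_apply]
  have h := MvPowerSeries.map_iterateFrobenius_expand p hp.out.ne_zero f n
  rw [hfrob, MvPowerSeries.map_id] at h
  exact h.symm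

lemma sq_eq_expand (f : (ZMod 2)⟦X⟧) : f ^ 2 = expand 2 two_ne_zero f :=
  pow_prime_pow_eq_expand 2 1 f

lemma pow_four_eq_expand (f : (ZMod 2)⟦X⟧) : f ^ 4 = expand 4 four_ne_zero f :=
  pow_prime_pow_eq_expand 2 2 f

lemma coeff_X_mul_expand (hk : 1 < k) (f : R⟦X⟧) (n : ℕ) :
    coeff n (X * expand k (by omega) f) = if n % k = 1 then coeff (n / k) f else 0 := by
  rcases n with _ | n
  · simp
  rw [coeff_succ_X_mul]
  by_cases hdvd : k ∣ n
  · obtain ⟨q, rfl⟩ := hdvd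
    rw [coeff_expand_mul, Nat.mul_add_mod, Nat.mod_eq_of_lt hk, if_pos rfl,
      Nat.mul_add_div (by omega), Nat.div_eq_of_lt hk, add_zero]
  · rw [coeff_expand_of_not_dvd _ _ _ hdvd, if_neg]
    intro hmod
    exact hdvd ((Nat.modEq_iff_dvd' (Nat.le_add_left 1 n)).1
      (hmod.trans (Nat.mod_eq_of_lt hk).symm).symm)

lemma coeff_mul_expand_add_X_mul_expand (hk : 1 < k) (f g : R⟦X⟧) (n : ℕ) :
    coeff (k * n) (expand k (by omega) f + X * expand k (by omega) g) = coeff n f := by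
  rw [map_add, coeff_expand_mul, coeff_X_mul_expand hk, if_neg (by simp), add_zero]

lemma coeff_mul_add_one_expand_add_X_mul_expand (hk : 1 < k) (f g : R⟦X⟧) (n : ℕ) :
    coeff (k * n + 1) (expand k (by omega) f + X * expand k (by omega) g) = coeff n g := by
  have hdvd : ¬ k ∣ k * n + 1 := by
    rw [← Nat.dvd_add_iff_right (dvd_mul_right k n), Nat.dvd_one]
    exact hk.ne'
  rw [map_add, coeff_expand_of_not_dvd _ _ _ hdvd, zero_add, coeff_succ_X_mul, coeff_expand_mul]

end Expand

section Derivative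

lemma derivative_sq_of_charP_two {R : Type*} [CommRing R] [CharP R 2] (f : R⟦X⟧) :
    d⁄dX R (f ^ 2) = 0 := by
  have : CharP R⟦X⟧ 2 := charP_of_injective_ringHom C_injective 2
  rw [sq, Derivation.leibniz, CharTwo.add_self_eq_zero]

lemma map_derivative {R S : Type*} [CommSemiring R] [CommSemiring S] (φ : R →+* S) (f : R⟦X⟧) :
    (d⁄dX R f).map φ = d⁄dX S (f.map φ) := by
  ext n
  simp [coeff_derivative]

lemma eight_dvd_coeff_pow_four_iff (f : ℕ⟦X⟧) {r : ℕ} (hr : Even r) :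
    8 ∣ coeff (r + 1) (f ^ 4) ↔
      coeff r (f.map (Nat.castRingHom (ZMod 2)) ^ 3 *
        d⁄dX (ZMod 2) (f.map (Nat.castRingHom (ZMod 2)))) = 0 := by
  have hderiv : coeff (r + 1) (f ^ 4) * (r + 1) = 4 * coeff r (f ^ 3 * d⁄dX ℕ f) := by
    have h := coeff_derivative (f ^ 4) r
    rw [derivative_pow, mul_assoc] at h
    rw [← coeff_C_mul]
    exact h.symm
  have hcoprime : Nat.Coprime 8 (r + 1) :=
    Nat.Coprime.pow_left 3 (Nat.coprime_two_left.2 hr.add_one)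
  rw [← map_derivative, ← map_pow, ← map_mul, coeff_map, Nat.coe_castRingHom,
    ZMod.natCast_eq_zero_iff, ← hcoprime.dvd_mul_right, hderiv]
  exact Nat.mul_dvd_mul_iff_left (b := 2) four_pos

end Derivative

section Pentagonal

lemma mem_range_pentagonal_iff {n : ℕ} :
    n ∈ Set.range pentagonal ↔ IsSquare (24 * n + 1) := by
  constructor
  · rintro ⟨k, rfl⟩
    refine ⟨(6 * k - 1).natAbs, ?_⟩
    zify
    rw [abs_mul_abs_self]
    linear_combination 12 * two_mul_natCast_pentagonal k
  · rintro ⟨z, hz⟩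
    have hmod : z % 6 = 1 ∨ z % 6 = 5 := by
      have hsq : z * z % 6 = 1 := by omega
      have hlt : z % 6 < 6 := Nat.mod_lt _ (by norm_num)
      rw [Nat.mul_mod] at hsq
      interval_cases z % 6 <;> simp_all
    obtain ⟨k, hk⟩ : ∃ k : ℤ, (z : ℤ) = |6 * k - 1| := by
      rcases hmod with h | h
      · exact ⟨-(z / 6 : ℕ), by grind⟩
      · exact ⟨((z + 1) / 6 : ℕ), by grind⟩
    have hz' : (24 * n + 1 : ℤ) = z * z := by exact_mod_cast hz
    rw [hk, abs_mul_abs_self] at hz'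
    refine ⟨k, ?_⟩
    have := two_mul_natCast_pentagonal k
    zify
    linarith

lemma coeff_pentagonalSeries_zmod_two (n : ℕ) :
    coeff n (pentagonalSeries (ZMod 2)) = if IsSquare (24 * n + 1) then 1 else 0 := by
  have hone : ∀ c : ZMod 2, c ≠ 0 → c = 1 := by decide
  have hzero := coeff_pentagonalSeries_eq_zero_iff (ZMod 2) (n := n)
  rw [mem_range_pentagonal_iff] at hzero
  split_ifs with h
  · exact hone _ fun h0 => hzero.1 h0 h
  · exact hzero.2 h

lemma pentagonalSeries_zmod_two_ne_zero : pentagonalSeries (ZMod 2) ≠ 0 := by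
  intro h
  simpa [h] using coeff_pentagonalSeries_zmod_two 0

open PowerSeries.WithPiTopology in
lemma hasProd_expand_pentagonalSeries {R : Type*} [CommRing R] [TopologicalSpace R]
    {k : ℕ} (hk : k ≠ 0) :
    HasProd (fun i : ℕ => if k ∣ i + 1 then (1 : R⟦X⟧) - X ^ (i + 1) else 1)
      (expand k hk (pentagonalSeries R)) := by
  have hkpos : 0 < k := Nat.pos_of_ne_zero hk
  have hsucc (i : ℕ) : k * (i + 1) - 1 + 1 = k * (i + 1) := Nat.sub_add_cancel (by nlinarith)
  have hinj : Function.Injective fun i : ℕ => k * (i + 1) - 1 := fun i j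
      (hij : k * (i + 1) - 1 = k * (j + 1) - 1) => by
    have hmul : k * (i + 1) = k * (j + 1) := by rw [← hsucc i, ← hsucc j, hij]
    exact Nat.succ_injective (Nat.eq_of_mul_eq_mul_left hkpos hmul)
  rw [← hinj.hasProd_iff]
  · convert (hasProd_one_sub_X_pow R).map (expand k hk) (continuous_expand hk) using 1
    funext i
    simp only [Function.comp_apply, hsucc, dvd_mul_right, if_true, map_sub, map_one, map_pow,
      expand_X, pow_mul]
  · refine fun i hi => if_neg ?_
    rintro ⟨_ | c, hc⟩
    · omega
    · exact hi ⟨c, by simp only; omega⟩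

open PowerSeries.WithPiTopology in
lemma restrictedGenFun_mul_pentagonalSeries {R : Type*} [CommRing R] {l m : ℕ} (hl : l ≠ 0)
    (hm : m ≠ 0) :
    restrictedGenFun R (fun i => ¬ l ∣ i ∧ ¬ m ∣ i) * pentagonalSeries R *
        expand (l.lcm m) (Nat.lcm_ne_zero hl hm) (pentagonalSeries R) =
      expand l hl (pentagonalSeries R) * expand m hm (pentagonalSeries R) := by
  let _ : TopologicalSpace R := ⊥
  have : DiscreteTopology R := ⟨rfl⟩
  refine (((Nat.Partition.hasProd_powerSeriesMk_card_restricted R _).mul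
    (hasProd_one_sub_X_pow R)).mul (hasProd_expand_pentagonalSeries _)).unique ?_
  refine ((hasProd_expand_pentagonalSeries hl).mul
    (hasProd_expand_pentagonalSeries hm)).congr_fun fun i => ?_
  have hgeom : (∑' j : ℕ, (X : R⟦X⟧) ^ ((i + 1) * j)) * (1 - X ^ (i + 1)) = 1 := by
    simp_rw [pow_mul]
    exact tsum_pow_mul_one_sub_of_constantCoeff_eq_zero (by simp)
  by_cases hli : l ∣ i + 1 <;> by_cases hmi : m ∣ i + 1 <;>
    simp [hli, hmi, hgeom, Nat.lcm_dvd_iff]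

end Pentagonal

section EisensteinRotation

/-- For odd `x` and `y`, exactly one of `ω (x + y √-3)` and `ω (x - y √-3)`, where
`ω = (-1 + √-3) / 2`, has odd coordinates in the basis `1, √-3`; which one depends on whether
`x ≡ y [MOD 4]`. This is that number, with coordinates taken in absolute value. -/
def eisensteinRotate (z : ℕ × ℕ) : ℕ × ℕ :=
  if z.1 % 4 = z.2 % 4 then ((3 * z.2 - z.1 : ℤ).natAbs / 2, (z.1 + z.2) / 2)
  else ((z.1 + 3 * z.2) / 2, (z.1 - z.2 : ℤ).natAbs / 2)

lemma four_mul_sq_natAbs_div_two {a : ℤ} (ha : Even a) :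
    4 * ((a.natAbs / 2 : ℕ) : ℤ) ^ 2 = a ^ 2 := by
  obtain ⟨b, rfl⟩ := ha
  rw [show (b + b).natAbs / 2 = b.natAbs by omega, Int.natCast_natAbs, sq_abs]
  ring

lemma eisensteinRotate_eq_self_iff {x y : ℕ} (hy : Odd y) :
    eisensteinRotate (x, y) = (x, y) ↔ x = y ∨ x = 3 * y := by
  rw [Nat.odd_iff] at hy
  unfold eisensteinRotate
  split_ifs <;> simp only [Prod.mk.injEq] at * <;> omega

variable {x y : ℕ} (hx : Odd x) (hy : Odd y)
include hx hy

lemma eisensteinRotate_norm :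
    (eisensteinRotate (x, y)).1 ^ 2 + 3 * (eisensteinRotate (x, y)).2 ^ 2 =
      x ^ 2 + 3 * y ^ 2 := by
  unfold eisensteinRotate
  zify
  split_ifs
  · have hu := four_mul_sq_natAbs_div_two (a := 3 * y - x) (by grind)
    have hv := four_mul_sq_natAbs_div_two (a := (x + y : ℕ)) (by grind)
    rw [Int.natAbs_natCast] at hv
    push_cast at hu hv ⊢
    linarith
  · have hu := four_mul_sq_natAbs_div_two (a := (x + 3 * y : ℕ)) (by grind)
    have hv := four_mul_sq_natAbs_div_two (a := x - y) (by grind)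
    rw [Int.natAbs_natCast] at hu
    push_cast at hu hv ⊢
    linarith

lemma odd_eisensteinRotate :
    Odd (eisensteinRotate (x, y)).1 ∧ Odd (eisensteinRotate (x, y)).2 := by
  rw [Nat.odd_iff] at *
  unfold eisensteinRotate
  split_ifs <;> grind

lemma eisensteinRotate_eisensteinRotate : eisensteinRotate (eisensteinRotate (x, y)) = (x, y) := by
  rw [Nat.odd_iff] at hx hy
  unfold eisensteinRotate
  split_ifs <;> simp only [Prod.mk.injEq] at * <;> omega

end EisensteinRotation

section OddRepresentations

/-- The odd solutions `x` of `k x ^ 2 = N`. The search range is exhaustive only for `k ≠ 0`. -/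
def oddRoots (k N : ℕ) : Finset ℕ := {x ∈ range (N + 1) | Odd x ∧ k * x ^ 2 = N}

lemma mem_oddRoots {k N x : ℕ} (hk : k ≠ 0) : x ∈ oddRoots k N ↔ Odd x ∧ k * x ^ 2 = N := by
  rw [oddRoots, mem_filter, mem_range, and_iff_right_iff_imp]
  rintro ⟨-, rfl⟩
  exact Nat.lt_succ_of_le ((Nat.le_self_pow two_ne_zero x).trans
    (Nat.le_mul_of_pos_left _ (Nat.pos_of_ne_zero hk)))

/-- The representations of `N` by the form `x ^ 2 + 3 y ^ 2` with `x` and `y` odd and positive. -/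
def oddReps (N : ℕ) : Finset (ℕ × ℕ) :=
  {z ∈ range (N + 1) ×ˢ range (N + 1) | Odd z.1 ∧ Odd z.2 ∧ z.1 ^ 2 + 3 * z.2 ^ 2 = N}

lemma mem_oddReps {N : ℕ} {z : ℕ × ℕ} :
    z ∈ oddReps N ↔ Odd z.1 ∧ Odd z.2 ∧ z.1 ^ 2 + 3 * z.2 ^ 2 = N := by
  rw [oddReps, mem_filter, mem_product, mem_range, mem_range, and_iff_right_iff_imp]
  rintro ⟨-, -, rfl⟩
  constructor <;> nlinarith

lemma card_oddReps_eq_sum (N : ℕ) :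
    #(oddReps N) = ∑ ij ∈ antidiagonal N, #(oddRoots 1 ij.1) * #(oddRoots 3 ij.2) := by
  rw [card_eq_sum_card_fiberwise (f := fun z : ℕ × ℕ => (z.1 ^ 2, 3 * z.2 ^ 2))
    (t := antidiagonal N) fun z hz => mem_antidiagonal.2 (mem_oddReps.1 hz).2.2]
  refine sum_congr rfl fun ⟨i, j⟩ hij => ?_
  rw [← card_product]
  congr 1
  ext ⟨x, y⟩
  simp only [mem_filter, mem_oddReps, mem_product, mem_oddRoots one_ne_zero,
    mem_oddRoots three_ne_zero, Prod.mk.injEq, one_mul]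
  have hN : i + j = N := mem_antidiagonal.1 hij
  grind

lemma filter_eisensteinRotate_eq_self (N : ℕ) : {z ∈ oddReps N | eisensteinRotate z = z} =
    (oddRoots 4 N).image (fun x => (x, x)) ∪ (oddRoots 12 N).image fun x => (3 * x, x) := by
  ext ⟨x, y⟩
  simp only [mem_filter, mem_union, mem_image, mem_oddReps, mem_oddRoots four_ne_zero,
    mem_oddRoots (show 12 ≠ 0 by norm_num), Prod.mk.injEq]
  constructor
  · rintro ⟨⟨hx, hy, rfl⟩, hfix⟩
    rcases (eisensteinRotate_eq_self_iff hy).1 hfix with rfl | rfl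
    · exact Or.inl ⟨x, ⟨hx, by ring⟩, rfl, rfl⟩
    · exact Or.inr ⟨y, ⟨hy, by ring⟩, rfl, rfl⟩
  · rintro (⟨_, ⟨hx, rfl⟩, rfl, rfl⟩ | ⟨_, ⟨hy, rfl⟩, rfl, rfl⟩)
    · exact ⟨⟨hx, hx, by ring⟩, (eisensteinRotate_eq_self_iff hx).2 (Or.inl rfl)⟩
    · have hx := (by decide : Odd 3).mul hy
      exact ⟨⟨hx, hy, by ring⟩, (eisensteinRotate_eq_self_iff hy).2 (Or.inr rfl)⟩

lemma card_zmod_two_eq_card_fixed_of_involution {α : Type*} [DecidableEq α] (s : Finset α)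
    (g : α → α) (hmem : ∀ a ∈ s, g a ∈ s) (hinv : ∀ a ∈ s, g (g a) = a) :
    (#s : ZMod 2) = #{a ∈ s | g a = a} := by
  rw [← card_filter_add_card_filter_not (s := s) (fun a => g a = a), Nat.cast_add,
    add_eq_left, card_eq_sum_ones, Nat.cast_sum]
  refine sum_involution (fun a _ => g a) (fun _ _ => by decide) (fun a ha _ => (mem_filter.1 ha).2)
    (fun a ha => ?_) (fun a ha => hinv a (mem_filter.1 ha).1)
  obtain ⟨has, hne⟩ := mem_filter.1 ha
  refine mem_filter.2 ⟨hmem a has, fun h => hne ?_⟩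
  rw [← hinv a has, h, h]

lemma card_oddReps_zmod_two (N : ℕ) :
    (#(oddReps N) : ZMod 2) = #(oddRoots 4 N) + #(oddRoots 12 N) := by
  have hmem : ∀ z ∈ oddReps N, eisensteinRotate z ∈ oddReps N := fun z hz => by
    obtain ⟨hx, hy, hN⟩ := mem_oddReps.1 hz
    have hodd := odd_eisensteinRotate hx hy
    exact mem_oddReps.2 ⟨hodd.1, hodd.2, (eisensteinRotate_norm hx hy).trans hN⟩
  have hinv : ∀ z ∈ oddReps N, eisensteinRotate (eisensteinRotate z) = z := fun z hz =>
    eisensteinRotate_eisensteinRotate (mem_oddReps.1 hz).1 (mem_oddReps.1 hz).2.1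
  have hdisj : Disjoint ((oddRoots 4 N).image fun x => (x, x))
      ((oddRoots 12 N).image fun x => (3 * x, x)) := by
    simp only [disjoint_left, mem_image, mem_oddRoots four_ne_zero]
    grind
  rw [card_zmod_two_eq_card_fixed_of_involution _ eisensteinRotate hmem hinv,
    filter_eisensteinRotate_eq_self, card_union_of_disjoint hdisj, Nat.cast_add,
    card_image_of_injective _ fun x y h => by grind,
    card_image_of_injective _ fun x y h => by grind]

end OddRepresentations

section ThetaSeries

/-- The theta series `Θ = ∑ q ^ (n ^ 2)` modulo 2, summed over the odd positive integers `n`. -/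
noncomputable def oddSquareSeries : (ZMod 2)⟦X⟧ :=
  .mk fun n => if Odd n ∧ IsSquare n then 1 else 0

/-- Ramanujan's theta function `ψ = ∑ q ^ (n (n + 1) / 2)` modulo 2, where `n` ranges over the
natural numbers: `N` is triangular if and only if `8 N + 1` is a square. -/
noncomputable def triangularSeries : (ZMod 2)⟦X⟧ :=
  .mk fun n => if IsSquare (8 * n + 1) then 1 else 0

local notation "Θ" => oddSquareSeries
local notation "ψ" => triangularSeries
local notation "ψ₃" => expand 3 three_ne_zero triangularSeries

lemma coeff_expand_oddSquareSeries {k : ℕ} (hk : k ≠ 0) (N : ℕ) :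
    coeff N (expand k hk Θ) = #(oddRoots k N) := by
  rw [coeff_expand, oddSquareSeries, coeff_mk, ← ite_and]
  split_ifs with h
  · obtain ⟨⟨M, rfl⟩, hodd, hsq⟩ := h
    rw [Nat.mul_div_cancel_left M (Nat.pos_of_ne_zero hk)] at hodd hsq
    obtain ⟨r, rfl⟩ := hsq
    have hroots : oddRoots k (k * (r * r)) = {r} := by
      ext x
      rw [mem_oddRoots hk, mem_singleton]
      constructor
      · rintro ⟨-, hx⟩
        rw [← sq] at hx
        simpa [hk] using hx
      · rintro rfl
        exact ⟨Nat.Odd.of_mul_left hodd, by ring⟩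
    rw [hroots, card_singleton, Nat.cast_one]
  · rw [card_eq_zero.2, Nat.cast_zero]
    refine eq_empty_of_forall_notMem fun x hx => h ?_
    obtain ⟨hodd, rfl⟩ := (mem_oddRoots hk).1 hx
    rw [Nat.mul_div_cancel_left _ (Nat.pos_of_ne_zero hk)]
    exact ⟨dvd_mul_right _ _, hodd.pow, IsSquare.sq x⟩

lemma oddSquareSeries_mul_expand_three :
    Θ * expand 3 three_ne_zero Θ = Θ ^ 4 + expand 3 three_ne_zero Θ ^ 4 := by
  rw [pow_four_eq_expand, pow_four_eq_expand, ← expand_mul]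
  ext N
  calc coeff N (Θ * expand 3 three_ne_zero Θ)
      = coeff N (expand 1 one_ne_zero Θ * expand 3 three_ne_zero Θ) := by
        rw [expand_one_apply]
    _ = #(oddReps N) := by
        simp only [coeff_mul, coeff_expand_oddSquareSeries, card_oddReps_eq_sum, Nat.cast_sum,
          Nat.cast_mul]
    _ = _ := by
        simp only [map_add, coeff_expand_oddSquareSeries, card_oddReps_zmod_two, Nat.reduceMul]

lemma X_mul_expand_triangularSeries : X * expand 8 (by norm_num) ψ = Θ := by
  ext n
  rw [coeff_X_mul_expand (by norm_num), triangularSeries, oddSquareSeries, coeff_mk, coeff_mk,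
    ← ite_and]
  refine if_congr ⟨?_, ?_⟩ rfl rfl
  · rintro ⟨hmod, hsq⟩
    rw [show 8 * (n / 8) + 1 = n by omega] at hsq
    exact ⟨by grind, hsq⟩
  · rintro ⟨hodd, r, rfl⟩
    have hmod : r * r % 8 = 1 := by
      have := Nat.eight_dvd_sq_sub_one_of_odd (Nat.Odd.of_mul_left hodd)
      grind
    rw [show 8 * (r * r / 8) + 1 = r * r by omega]
    exact ⟨hmod, r, rfl⟩

lemma sq_mod_twenty_four_eq_one_iff (x : ℕ) : x * x % 24 = 1 ↔ Odd x ∧ ¬ 3 ∣ x := by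
  have key : ∀ r < 24, r * r % 24 = 1 ↔ r % 2 = 1 ∧ r % 3 ≠ 0 := by decide
  rw [Nat.mul_mod, key _ (Nat.mod_lt x (by norm_num)), Nat.odd_iff]
  omega

lemma coeff_X_mul_expand_pentagonalSeries (n : ℕ) :
    coeff n (X * expand 24 (by norm_num) (pentagonalSeries (ZMod 2))) =
      if n % 24 = 1 ∧ IsSquare n then 1 else 0 := by
  rw [coeff_X_mul_expand (by norm_num), coeff_pentagonalSeries_zmod_two, ← ite_and]
  refine if_congr (and_congr_right fun hmod => ?_) rfl rfl
  rw [show 24 * (n / 24) + 1 = n by omega]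

lemma isSquare_nine_mul_iff {n : ℕ} : IsSquare (9 * n) ↔ IsSquare n := by
  constructor
  · rintro ⟨s, hs⟩
    obtain ⟨t, rfl⟩ : 3 ∣ s := by
      rw [← Nat.pow_dvd_pow_iff two_ne_zero, sq s, ← hs]
      exact dvd_mul_right 9 n
    exact ⟨t, by linarith⟩
  · rintro ⟨s, rfl⟩
    exact ⟨3 * s, by ring⟩

lemma coeff_expand_nine_oddSquareSeries (n : ℕ) :
    coeff n (expand 9 (by norm_num) Θ) = if 9 ∣ n ∧ Odd n ∧ IsSquare n then 1 else 0 := by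
  rw [coeff_expand, oddSquareSeries, coeff_mk, ← ite_and]
  refine if_congr (and_congr_right ?_) rfl rfl
  rintro ⟨q, rfl⟩
  rw [Nat.mul_div_cancel_left _ (by norm_num), isSquare_nine_mul_iff, Nat.odd_mul,
    and_iff_right (show Odd 9 by decide)]

lemma X_mul_expand_pentagonalSeries :
    X * expand 24 (by norm_num) (pentagonalSeries (ZMod 2)) =
      Θ + expand 9 (by norm_num) Θ := by
  ext n
  rw [map_add, coeff_X_mul_expand_pentagonalSeries, coeff_expand_nine_oddSquareSeries,
    oddSquareSeries, coeff_mk]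
  by_cases hn : IsSquare n
  · obtain ⟨r, rfl⟩ := hn
    have hdvd : 9 ∣ r * r ↔ 3 ∣ r := by
      rw [← sq, show 9 = 3 ^ 2 by norm_num, Nat.pow_dvd_pow_iff two_ne_zero]
    by_cases hodd : Odd r <;> by_cases hthree : 3 ∣ r <;>
      simp [sq_mod_twenty_four_eq_one_iff, Nat.odd_mul, hodd, hdvd, hthree,
        CharTwo.add_self_eq_zero]
  · simp [hn]

lemma expand_three_oddSquareSeries : expand 3 three_ne_zero Θ =
    (X * expand 24 (by norm_num) (pentagonalSeries (ZMod 2))) ^ 3 := by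
  have : CharP (ZMod 2)⟦X⟧ 2 := charP_of_injective_ringHom C_injective 2
  have h₁ := oddSquareSeries_mul_expand_three
  have h₃ := congrArg (expand 3 three_ne_zero) h₁
  rw [map_mul, map_add, map_pow, map_pow, ← expand_mul] at h₃
  set η := X * expand 24 (by norm_num) (pentagonalSeries (ZMod 2))
  have hη : η = Θ + expand (3 * 3) (by norm_num) Θ := X_mul_expand_pentagonalSeries
  have hη₄ : η ^ 4 = Θ ^ 4 + expand (3 * 3) (by norm_num) Θ ^ 4 := by
    rw [hη]
    exact add_pow_char_pow (p := 2) (n := 2) ..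
  have hne : η ≠ 0 := mul_ne_zero X_ne_zero
    ((map_ne_zero_iff _ (expand_injective (by norm_num))).2 pentagonalSeries_zmod_two_ne_zero)
  apply mul_left_cancel₀ hne
  linear_combination h₁ + h₃ + expand 3 three_ne_zero Θ * hη - hη₄ +
    expand 3 three_ne_zero Θ ^ 4 * CharTwo.two_eq_zero (R := (ZMod 2)⟦X⟧)

lemma triangularSeries_eq_pow_three : ψ = pentagonalSeries (ZMod 2) ^ 3 := by
  apply expand_injective (k := 24) (by norm_num)
  apply mul_left_cancel₀ (pow_ne_zero 3 (X_ne_zero (R := ZMod 2)))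
  calc X ^ 3 * expand 24 (by norm_num) ψ
      = expand 3 three_ne_zero (X * expand 8 (by norm_num) ψ) := by
        rw [map_mul, expand_X, ← expand_mul]
    _ = _ := by
        rw [X_mul_expand_triangularSeries, expand_three_oddSquareSeries, map_pow, mul_pow]

lemma triangularSeries_mul_expand_three : ψ * ψ₃ = ψ ^ 4 + X * ψ₃ ^ 4 := by
  apply expand_injective (k := 8) (by norm_num)
  apply mul_left_cancel₀ (pow_ne_zero 4 (X_ne_zero (R := ZMod 2)))
  have h := oddSquareSeries_mul_expand_three
  rw [← X_mul_expand_triangularSeries, map_mul, expand_X, ← expand_mul] at h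
  simp only [map_mul, map_add, map_pow, expand_X]
  rw [← expand_mul]
  linear_combination h

end ThetaSeries

section RegularPartitions

local notation "ψ" => triangularSeries
local notation "ψ₃" => expand 3 three_ne_zero triangularSeries
local notation "𝒜" => restrictedGenFun (ZMod 2) fun i => ¬ 3 ∣ i ∧ ¬ 4 ∣ i

lemma regularGenFun_mul_expand_triangularSeries : 𝒜 * ψ₃ = ψ := by
  set E := pentagonalSeries (ZMod 2)
  have h := restrictedGenFun_mul_pentagonalSeries (R := ZMod 2) three_ne_zero four_ne_zero
  have hlcm : expand (Nat.lcm 3 4) (by decide) E = expand 3 three_ne_zero E ^ 4 := by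
    rw [← map_pow, pow_four_eq_expand, ← expand_mul]
    rfl
  have hne : expand 3 three_ne_zero E ≠ 0 :=
    (map_ne_zero_iff _ (expand_injective three_ne_zero)).2 pentagonalSeries_zmod_two_ne_zero
  rw [hlcm, ← pow_four_eq_expand] at h
  rw [triangularSeries_eq_pow_three, map_pow]
  refine mul_left_cancel₀ (mul_ne_zero pentagonalSeries_zmod_two_ne_zero hne) ?_
  linear_combination h

lemma regularGenFun_mul_expand_triangularSeries_sq : 𝒜 * ψ₃ ^ 2 = ψ ^ 4 + X * ψ₃ ^ 4 := by
  linear_combination triangularSeries_mul_expand_three +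
    ψ₃ * regularGenFun_mul_expand_triangularSeries

lemma derivative_regularGenFun : d⁄dX (ZMod 2) 𝒜 = ψ₃ ^ 2 := by
  have hsq (f : (ZMod 2)⟦X⟧) : d⁄dX (ZMod 2) (f ^ 2) = 0 := derivative_sq_of_charP_two f
  have hpow (f : (ZMod 2)⟦X⟧) : d⁄dX (ZMod 2) (f ^ 4) = 0 := by
    rw [show f ^ 4 = (f ^ 2) ^ 2 by ring, hsq]
  have hd := congrArg (d⁄dX (ZMod 2)) regularGenFun_mul_expand_triangularSeries_sq
  rw [Derivation.leibniz, hsq, map_add, hpow, Derivation.leibniz, hpow, derivative_X] at hd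
  simp only [smul_eq_mul, mul_zero, zero_add, mul_one] at hd
  have hne : ψ₃ ≠ 0 := by
    rw [map_ne_zero_iff _ (expand_injective three_ne_zero), triangularSeries_eq_pow_three]
    exact pow_ne_zero 3 pentagonalSeries_zmod_two_ne_zero
  refine mul_left_cancel₀ (pow_ne_zero 2 hne) ?_
  linear_combination hd

lemma regularGenFun_pow_three_mul_derivative : 𝒜 ^ 3 * d⁄dX (ZMod 2) 𝒜 = 𝒜 * ψ ^ 2 := by
  rw [derivative_regularGenFun]
  linear_combination 𝒜 * (𝒜 * ψ₃ + ψ) * regularGenFun_mul_expand_triangularSeries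

lemma regularGenFun_mul_triangularSeries_sq_dissection :
    𝒜 * ψ ^ 2 = expand 2 two_ne_zero (𝒜 * ψ ^ 2) + X * expand 2 two_ne_zero (ψ * ψ₃) := by
  rw [← sq_eq_expand, ← sq_eq_expand]
  linear_combination 𝒜 ^ 2 * regularGenFun_mul_expand_triangularSeries_sq -
    (𝒜 - X * ψ₃ ^ 2) * (ψ + 𝒜 * ψ₃) * regularGenFun_mul_expand_triangularSeries

lemma triangularSeries_mul_expand_three_dissection :
    ψ * ψ₃ = expand 4 four_ne_zero ψ + X * expand 4 four_ne_zero ψ₃ := by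
  rw [triangularSeries_mul_expand_three, pow_four_eq_expand, pow_four_eq_expand]

lemma coeff_regularGenFun_mul_sq_two_mul_two_mul_add_one (n : ℕ) :
    coeff (2 * (2 * n + 1)) (𝒜 * ψ ^ 2) = coeff n (ψ * ψ₃) := by
  rw [regularGenFun_mul_triangularSeries_sq_dissection,
    coeff_mul_expand_add_X_mul_expand one_lt_two, regularGenFun_mul_triangularSeries_sq_dissection,
    coeff_mul_add_one_expand_add_X_mul_expand one_lt_two]

lemma coeff_regularGenFun_mul_sq_sixteen_mul_add_two (j : ℕ) :
    coeff (16 * j + 2) (𝒜 * ψ ^ 2) = coeff j ψ := by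
  rw [show 16 * j + 2 = 2 * (2 * (4 * j) + 1) by ring,
    coeff_regularGenFun_mul_sq_two_mul_two_mul_add_one,
    triangularSeries_mul_expand_three_dissection,
    coeff_mul_expand_add_X_mul_expand (by norm_num)]

lemma coeff_regularGenFun_mul_sq_forty_eight_mul_add_six (j : ℕ) :
    coeff (48 * j + 6) (𝒜 * ψ ^ 2) = coeff j ψ := by
  rw [show 48 * j + 6 = 2 * (2 * (4 * (3 * j) + 1) + 1) by ring,
    coeff_regularGenFun_mul_sq_two_mul_two_mul_add_one,
    triangularSeries_mul_expand_three_dissection,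
    coeff_mul_add_one_expand_add_X_mul_expand (by norm_num), coeff_expand_mul]

lemma eight_dvd_coloredRegular_succ_iff {r : ℕ} (hr : Even r) :
    8 ∣ coloredRegular 4 3 4 (r + 1) ↔ coeff r (𝒜 * ψ ^ 2) = 0 := by
  rw [coloredRegular_eq_coeff, eight_dvd_coeff_pow_four_iff _ hr, map_restrictedGenFun,
    regularGenFun_pow_three_mul_derivative]

lemma coeff_triangularSeries_eq_zero_iff (n : ℕ) : coeff n ψ = 0 ↔ ¬ IsSquare (8 * n + 1) := by
  simp [triangularSeries]

theorem eight_dvd_coloredRegular_sixteen_mul_add_three_iff (j : ℕ) :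
    8 ∣ coloredRegular 4 3 4 (16 * j + 3) ↔ ¬ IsSquare (8 * j + 1) := by
  rw [eight_dvd_coloredRegular_succ_iff (by grind),
    coeff_regularGenFun_mul_sq_sixteen_mul_add_two, coeff_triangularSeries_eq_zero_iff]

theorem eight_dvd_coloredRegular_forty_eight_mul_add_seven_iff (j : ℕ) :
    8 ∣ coloredRegular 4 3 4 (48 * j + 7) ↔ ¬ IsSquare (8 * j + 1) := by
  rw [eight_dvd_coloredRegular_succ_iff (by grind),
    coeff_regularGenFun_mul_sq_forty_eight_mul_add_six, coeff_triangularSeries_eq_zero_iff]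

end RegularPartitions

lemma not_isSquare_pow_odd_mul {p n : ℕ} (hp : Squarefree p) (hn : ¬ p ∣ n) (k : ℕ) :
    ¬ IsSquare (p ^ (2 * k + 1) * n) := by
  rintro ⟨z, hz⟩
  obtain ⟨w, rfl⟩ : p ^ k ∣ z := by
    rw [← Nat.pow_dvd_pow_iff two_ne_zero, sq z, ← hz]
    exact ⟨p * n, by ring⟩
  have hpk : 0 < p ^ (2 * k) := pow_pos (Nat.pos_of_ne_zero hp.ne_zero) _
  have hw : p * n = w ^ 2 := Nat.eq_of_mul_eq_mul_left hpk (by linear_combination hz)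
  obtain ⟨v, rfl⟩ : p ∣ w := (hp.dvd_pow_iff_dvd two_ne_zero).1 ⟨n, hw.symm⟩
  exact hn ⟨v ^ 2, Nat.eq_of_mul_eq_mul_left (Nat.pos_of_ne_zero hp.ne_zero)
    (by linear_combination hw)⟩

theorem stmt_9_general (p : ℕ) (hp : Squarefree p) (hodd : Odd p) (k m : ℕ) (hm : ¬ p ∣ m) :
    coloredRegular 4 3 4 (16 * p ^ (2 * k + 1) * m + 2 * p ^ (2 * k + 2) + 1) ≡ 0 [MOD 8] ∧
    coloredRegular 4 3 4 (48 * p ^ (2 * k + 1) * m + 6 * p ^ (2 * k + 2) + 1) ≡ 0 [MOD 8] := by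
  obtain ⟨t, ht⟩ : ∃ t, p ^ (2 * k + 2) = 8 * t + 1 := by
    obtain ⟨t, ht⟩ := Nat.eight_dvd_sq_sub_one_of_odd (hodd.pow (n := k + 1))
    refine ⟨t, ?_⟩
    rw [← ht, ← pow_mul, Nat.sub_add_cancel (Nat.one_le_pow _ _ hodd.pos)]
    ring
  have hndvd : ¬ p ∣ 8 * m + p := by
    rw [Nat.dvd_add_left dvd_rfl, (Nat.Coprime.pow_right 3 hodd.coprime_two_right).dvd_mul_left]
    exact hm
  have hnsq : ¬ IsSquare (8 * (p ^ (2 * k + 1) * m + t) + 1) := by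
    rw [show 8 * (p ^ (2 * k + 1) * m + t) + 1 = p ^ (2 * k + 1) * (8 * m + p) by
      linear_combination -ht]
    exact not_isSquare_pow_odd_mul hp hndvd k
  simp only [Nat.modEq_zero_iff_dvd]
  constructor
  · convert (eight_dvd_coloredRegular_sixteen_mul_add_three_iff _).2 hnsq using 2
    rw [ht]
    ring
  · convert (eight_dvd_coloredRegular_forty_eight_mul_add_seven_iff _).2 hnsq using 2
    rw [ht]
    ring

theorem stmt_9 (p : ℕ) (hp : p.Prime) (hp5 : 5 ≤ p)
    (hleg : @legendreSym p ⟨hp⟩ (-2) = -1) (k m : ℕ) (hm : ¬ p ∣ m) :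
    coloredRegular 4 3 4 (16 * p ^ (2 * k + 1) * m + 2 * p ^ (2 * k + 2) + 1) ≡ 0 [MOD 8] ∧
    coloredRegular 4 3 4 (48 * p ^ (2 * k + 1) * m + 6 * p ^ (2 * k + 2) + 1) ≡ 0 [MOD 8] := by
  exact stmt_9_general p hp.prime.squarefree (hp.odd_of_ne_two (by omega)) k m hm
end
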